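/- Let either d ≤ 2s and p ∈ [2,∞), or d > 2s and p ∈ [2, 2d/(d−2s)]. Suppose ρ satisfies c|x|^{−γ_0} ≤ ρ ≤ C|x|^{−γ_0} on B_1 and c|x|^{−γ} ≤ ρ ≤ C|x|^{−γ} on B_1^c with γ_0 ∈ [0,d) and γ ∈ [0, d − (p/2)(d−2s)]. Then X_{p,s,ρ} embeds continuously into the homogeneous Sobolev space Ḣ^s(ℝ^d), and the inequality (C_{d,s}/2) ∬_{ℝ^d×ℝ^d} (v(x)−v(y))^2/|x−y|^{d+2s} dx dy ≤ ∫_{ℝ^d} v(x) (−Δ)^s v(x) dx holds for every v ∈ X_{p,s,ρ}. -/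

import Mathlib

open MeasureTheory Filter Metric Set
open scoped Topology ENNReal

noncomputable section

abbrev Ed (d : ℕ) := EuclideanSpace ℝ (Fin d)

/-- Truncated (away from the singularity) fractional-Laplacian integral. -/
noncomputable def fracLapTrunc (d : ℕ) (s : ℝ) (f : Ed d → ℝ) (x : Ed d) (ε : ℝ) : ℝ :=
  ∫ y in {y : Ed d | ε ≤ dist x y}, (f x - f y) / dist x y ^ ((d : ℝ) + 2 * s)

/-- Fractional Laplacian, as a principal value (limit of truncated integrals),
with normalization constant `Cds`. -/
noncomputable def fracLap (d : ℕ) (s Cds : ℝ) (f : Ed d → ℝ) (x : Ed d) : ℝ :=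
  Cds * limUnder (𝓝[>] (0:ℝ)) (fracLapTrunc d s f x)

/-- `V` is the distributional fractional Laplacian of `v`. -/
def IsDistFracLap (d : ℕ) (s Cds : ℝ) (v V : Ed d → ℝ) : Prop :=
  ∀ φ : Ed d → ℝ, ContDiff ℝ (⊤ : ℕ∞) φ → HasCompactSupport φ →
    ∫ x, v x * fracLap d s Cds φ x = ∫ x, V x * φ x

/-- The nonlocal quantity `l_{p,s}(f)(x) = ∫ |f x - f y|^p / |x-y|^{d+ps} dy`. -/
noncomputable def lps (d : ℕ) (p s : ℝ) (f : Ed d → ℝ) (x : Ed d) : ℝ :=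
  ∫ y, |f x - f y| ^ p / dist x y ^ ((d : ℝ) + p * s)

/-- A weight comparable to `|x|^{-γ₀}` on the unit ball and to `|x|^{-γ}` outside. -/
def TwoPowerWeight (d : ℕ) (ρ : Ed d → ℝ) (c C γ₀ γ : ℝ) : Prop :=
  0 < c ∧ c < C ∧
  (∀ᵐ x : Ed d, ‖x‖ ≤ 1 → c * ‖x‖ ^ (-γ₀) ≤ ρ x ∧ ρ x ≤ C * ‖x‖ ^ (-γ₀)) ∧
  (∀ᵐ x : Ed d, 1 < ‖x‖ → c * ‖x‖ ^ (-γ) ≤ ρ x ∧ ρ x ≤ C * ‖x‖ ^ (-γ))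

/-- Standard mollification `f_ε = η_ε ∗ f` with `η_ε(x) = ε^{-d} η(x/ε)`. -/
noncomputable def mollify (d : ℕ) (η : Ed d → ℝ) (ε : ℝ) (f : Ed d → ℝ) (x : Ed d) : ℝ :=
  ∫ y, (ε ^ (-(d:ℝ)) * η (ε⁻¹ • (x - y))) * f y

/-- A smooth nonnegative probability mollifier supported in the unit ball. -/
def IsMollifier (d : ℕ) (η : Ed d → ℝ) : Prop :=
  ContDiff ℝ (⊤ : ℕ∞) η ∧ (∀ x, 0 ≤ η x) ∧ tsupport η ⊆ closedBall (0 : Ed d) 1 ∧ ∫ x, η x = 1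

/-- Membership in the weighted Lebesgue space `L^p(ρ dx)`. -/
def MemWLp (d : ℕ) (p : ℝ) (ρ f : Ed d → ℝ) : Prop :=
  AEStronglyMeasurable f (volume : Measure (Ed d)) ∧
    Integrable (fun x => |f x| ^ p * ρ x)

/-- `v ∈ X_{p,s,ρ}` with distributional fractional Laplacian `V`. -/
def MemX (d : ℕ) (s Cds p : ℝ) (ρ : Ed d → ℝ) (v V : Ed d → ℝ) : Prop :=
  MemWLp d p ρ v ∧ IsDistFracLap d s Cds v V ∧
    MemWLp d (p / (p - 1)) (fun x => ρ x ^ (-(p / (p - 1) - 1))) V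

/-- Weighted `L^p` norm. -/
noncomputable def wNorm (d : ℕ) (p : ℝ) (ρ f : Ed d → ℝ) : ℝ :=
  (∫ x, |f x| ^ p * ρ x) ^ (1 / p)

/-- Norm of the space `X_{p,s,ρ}` (on the pair `(v, (−Δ)^s v)`). -/
noncomputable def xNorm (d : ℕ) (p : ℝ) (ρ : Ed d → ℝ) (v V : Ed d → ℝ) : ℝ :=
  Real.sqrt ((wNorm d p ρ v) ^ 2 +
    (wNorm d (p / (p - 1)) (fun x => ρ x ^ (-(p / (p - 1) - 1))) V) ^ 2)

/-- Riesz potential `I_{d,s} ∗ f` with kernel constant `κ`. -/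
noncomputable def riesz (d : ℕ) (s κ : ℝ) (f : Ed d → ℝ) (x : Ed d) : ℝ :=
  ∫ y, κ * ‖x - y‖ ^ (-((d:ℝ) - 2 * s)) * f y

end

/-
Let `ηₙ` be mollifiers shrinking to the origin and `χₙ` smooth cutoffs equal to `1` on the ball of
radius `n + 1`. Test `(-Δ)^s v` against `ηₙ ∗ (χₙ (ηₙ ∗ v))` and move the outer mollification onto
`v`: with `u = ηₙ ∗ v`, symmetrizing the second differences turns the pairing into `C_{d,s} / 2`
times the Gagliardo energy of `u` localized by `χₙ`, plus the error `∫ u² (-Δ)^s χₙ / 2`. Since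
`(-Δ)^s χₙ` is bounded by `R^d (R + |x|)^(-d - 2s)` at scale `R = n + 1`, the condition on `γ` and
Hölder's inequality dominate the error by the `L^p(ρ)` norm of `v` uniformly in `R`, and it tends
to zero by density of compactly supported functions. The pairing converges to `∫ v (-Δ)^s v`
because the weight satisfies an `A₁` condition at the mollification scale, so that mollification is
bounded on `L^p(ρ)`; Fatou's lemma then gives the inequality for `v` itself.
-/

namespace FractionalLaplacian

open Module (finrank)

section Radial

variable {E : Type*} [NormedAddCommGroup E] [NormedSpace ℝ E] [FiniteDimensional ℝ E]
  [MeasureSpace E] [BorelSpace E] [(volume : Measure E).IsAddHaarMeasure]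

theorem integrableOn_ball_norm_rpow {b : ℝ} (hb : -(finrank ℝ E : ℝ) < b) (r : ℝ) :
    IntegrableOn (fun x : E => ‖x‖ ^ b) (ball 0 r) := by
  cases subsingleton_or_nontrivial E
  · exact Integrable.of_finite
  rw [integrableOn_fun_norm_addHaar volume (f := fun t : ℝ => t ^ b)]
  rcases le_or_gt r 0 with hr | -
  · simp [Ioo_eq_empty hr.not_gt]
  refine (((intervalIntegral.intervalIntegrable_rpow' (a := 0) (b := r) (r := finrank ℝ E - 1 + b)
    (by linarith)).1).mono_set Ioo_subset_Ioc_self).congr_fun (fun t ht => ?_) measurableSet_Ioo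
  dsimp only
  rw [Real.rpow_add ht.1, ← Real.rpow_natCast, Nat.cast_pred Module.finrank_pos, smul_eq_mul]

theorem integrableOn_compl_ball_norm_rpow {a : ℝ} (ha : finrank ℝ E < a) {r : ℝ} (hr : 0 < r) :
    IntegrableOn (fun x : E => ‖x‖ ^ (-a)) (ball 0 r)ᶜ := by
  have ha0 : 0 < a := (Nat.cast_nonneg _).trans_lt ha
  refine (((integrable_one_add_norm (μ := volume) ha).const_mul
    ((1 + r⁻¹) ^ a)).integrableOn).mono'
    (Measurable.aestronglyMeasurable (by fun_prop)) ?_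
  filter_upwards [ae_restrict_mem measurableSet_ball.compl] with x hx
  have hx : r ≤ ‖x‖ := by simpa using hx
  have hx0 : 0 < ‖x‖ := hr.trans_le hx
  rw [Real.norm_of_nonneg (by positivity), Real.rpow_neg hx0.le, Real.rpow_neg (by positivity),
    ← div_eq_mul_inv, ← Real.div_rpow (by positivity) (by positivity),
    ← Real.inv_rpow hx0.le]
  refine Real.rpow_le_rpow (by positivity) ?_ ha0.le
  rw [inv_eq_one_div, div_le_div_iff₀ hx0 (by positivity), add_mul, one_mul, one_mul, add_comm]
  gcongr
  exact (one_le_inv_mul₀ hr).2 hx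

theorem integrable_min_one_normSq_mul_rpow {a : ℝ} (ha : finrank ℝ E < a)
    (ha' : a < finrank ℝ E + 2) :
    Integrable fun h : E => min 1 (‖h‖ ^ 2) * ‖h‖ ^ (-a) := by
  rw [← integrableOn_univ, ← union_compl_self (ball (0 : E) 1)]
  refine .union ?_ ?_
  · refine (integrableOn_ball_norm_rpow (b := 2 - a) (by linarith) 1).mono' (by fun_prop) ?_
    filter_upwards with h
    rw [Real.norm_of_nonneg (by positivity)]
    rcases (norm_nonneg h).eq_or_lt with h0 | h0
    · simpa [← h0] using Real.rpow_nonneg le_rfl _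
    · rw [sub_eq_add_neg, Real.rpow_add h0, Real.rpow_two]
      gcongr
      exact min_le_right _ _
  · refine (integrableOn_compl_ball_norm_rpow ha one_pos).mono' (by fun_prop) ?_
    filter_upwards with h
    rw [Real.norm_of_nonneg (by positivity)]
    exact mul_le_of_le_one_left (by positivity) (min_le_left _ _)

end Radial

/-! ### Second differences -/

section SecondDiff

variable {E : Type*} [NormedAddCommGroup E]

/-- The symmetric second difference of `f` at `x` with increment `h`, normalised so that its
integral against `‖h‖ ^ (-(d + 2 * s))` is, up to a constant, `(-Δ)^s f x` without a principal
value. -/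
def secondDiff (f : E → ℝ) (h x : E) : ℝ :=
  2 * f x - f (x + h) - f (x - h)

theorem continuous_secondDiff {f : E → ℝ} (hf : Continuous f) :
    Continuous fun z : E × E => secondDiff f z.1 z.2 := by
  unfold secondDiff; fun_prop

theorem hasCompactSupport_secondDiff {f : E → ℝ} (hc : HasCompactSupport f) (h : E) :
    HasCompactSupport (secondDiff f h) := by
  have hadd : HasCompactSupport fun x => f (x + h) := hc.comp_homeomorph (Homeomorph.addRight h)
  have hsub : HasCompactSupport fun x => f (x - h) := hc.comp_homeomorph (Homeomorph.subRight h)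
  exact ((HasCompactSupport.mul_left (f := fun _ => (2 : ℝ)) hc).sub hadd).sub hsub

theorem abs_secondDiff_le_of_abs_le {f : E → ℝ} {M : ℝ} (hM : ∀ x, |f x| ≤ M) (h x : E) :
    |secondDiff f h x| ≤ 4 * M := by
  have h₀ := abs_le.1 (hM x)
  have h₁ := abs_le.1 (hM (x + h))
  have h₂ := abs_le.1 (hM (x - h))
  exact abs_le.2 ⟨by unfold secondDiff; linarith, by unfold secondDiff; linarith⟩

theorem norm_le_of_secondDiff_ne_zero {f : E → ℝ} {r : ℝ} (hr : ∀ y, r < ‖y‖ → f y = 0) {h x : E}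
    (hx : r < ‖x‖) (hne : secondDiff f h x ≠ 0) : ‖x‖ ≤ r + ‖h‖ := by
  by_contra! hlt
  have hadd : r < ‖x + h‖ := by
    have := norm_sub_norm_le x (-h)
    rw [sub_neg_eq_add, norm_neg] at this
    linarith
  have hsub : r < ‖x - h‖ := by linarith [norm_sub_norm_le x h]
  exact hne (by simp [secondDiff, hr _ hx, hr _ hadd, hr _ hsub])

variable [NormedSpace ℝ E]

theorem abs_secondDiff_le_of_lipschitzWith_fderiv {f : E → ℝ} (hf : Differentiable ℝ f)
    {L : NNReal} (hL : LipschitzWith L (fderiv ℝ f)) (h x : E) :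
    |secondDiff f h x| ≤ 2 * L * ‖h‖ ^ 2 := by
  let g : ℝ → ℝ := fun t => f (x + t • h) + f (x - t • h)
  have hg (t : ℝ) : HasDerivAt g ((fderiv ℝ f (x + t • h) - fderiv ℝ f (x - t • h)) h) t := by
    have hadd : HasDerivAt (fun t : ℝ => x + t • h) h t := by
      simpa using ((hasDerivAt_id t).smul_const h).const_add x
    have hsub : HasDerivAt (fun t : ℝ => x - t • h) (-h) t := by
      simpa using ((hasDerivAt_id t).smul_const h).const_sub x
    have hadd' := (hf _).hasFDerivAt.comp_hasDerivAt t hadd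
    have hsub' := (hf _).hasFDerivAt.comp_hasDerivAt t hsub
    rw [map_neg] at hsub'
    rw [sub_apply, sub_eq_add_neg]
    exact hadd'.add hsub'
  have hg_le : ∀ t ∈ Icc (0 : ℝ) 1,
      ‖(fderiv ℝ f (x + t • h) - fderiv ℝ f (x - t • h)) h‖ ≤ 2 * L * ‖h‖ ^ 2 := by
    intro t ht
    have hdiff : (x + t • h) - (x - t • h) = (2 * t) • h := by rw [two_mul, add_smul]; abel
    calc ‖(fderiv ℝ f (x + t • h) - fderiv ℝ f (x - t • h)) h‖
        ≤ L * ‖(2 * t) • h‖ * ‖h‖ :=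
          ContinuousLinearMap.le_of_opNorm_le _ (by rw [← hdiff]; exact hL.norm_sub_le _ _) _
      _ = 2 * L * ‖h‖ ^ 2 * t := by
          rw [norm_smul, Real.norm_of_nonneg (by linarith [ht.1])]; ring
      _ ≤ 2 * L * ‖h‖ ^ 2 := mul_le_of_le_one_right (by positivity) ht.2
  have hmvt := (convex_Icc (0 : ℝ) 1).norm_image_sub_le_of_norm_hasDerivWithin_le
    (fun t _ => (hg t).hasDerivWithinAt) hg_le (left_mem_Icc.2 zero_le_one)
    (right_mem_Icc.2 zero_le_one)
  have hg01 : g 1 - g 0 = -secondDiff f h x := by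
    simp only [g, secondDiff, one_smul, zero_smul, add_zero, sub_zero]; ring
  simpa [hg01] using hmvt

theorem exists_abs_secondDiff_le {f : E → ℝ} (hf : ContDiff ℝ 2 f) (hc : HasCompactSupport f) :
    ∃ B, 0 ≤ B ∧ ∀ h x, |secondDiff f h x| ≤ B * min 1 (‖h‖ ^ 2) := by
  obtain ⟨M, hM⟩ := hc.exists_bound_of_continuous hf.continuous
  obtain ⟨L, hL⟩ := ContDiff.lipschitzWith_of_hasCompactSupport (n := 1)
    (hc.fderiv (𝕜 := ℝ)) (hf.fderiv_right (by norm_num)) one_ne_zero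
  have hM0 : 0 ≤ M := (norm_nonneg _).trans (hM 0)
  refine ⟨4 * M + 2 * L, by positivity, fun h x => ?_⟩
  have h₁ := abs_secondDiff_le_of_abs_le hM h x
  have h₂ := abs_secondDiff_le_of_lipschitzWith_fderiv (hf.differentiable two_ne_zero) hL h x
  rcases le_total 1 (‖h‖ ^ 2) with hh | hh
  · rw [min_eq_left hh, mul_one]
    exact h₁.trans (le_add_of_nonneg_right (by positivity))
  · rw [min_eq_right hh, add_mul]
    exact h₂.trans (le_add_of_nonneg_left (by positivity))

theorem secondDiff_comp_inv_smul_mul_rpow (f : E → ℝ) (a : ℝ) {R : ℝ} (hR : 0 < R) (h x : E) :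
    |secondDiff (fun y => f (R⁻¹ • y)) h x| * ‖h‖ ^ (-a) =
      R ^ (-a) * (|secondDiff f (R⁻¹ • h) (R⁻¹ • x)| * ‖R⁻¹ • h‖ ^ (-a)) := by
  rw [norm_smul, Real.norm_of_nonneg (by positivity), Real.mul_rpow (by positivity) (by positivity),
    Real.inv_rpow hR.le]
  simp only [secondDiff, smul_add, smul_sub]
  field_simp

end SecondDiff

section Decay

variable {E : Type*} [NormedAddCommGroup E] [NormedSpace ℝ E] [FiniteDimensional ℝ E]
  [MeasureSpace E] [BorelSpace E] [(volume : Measure E).IsAddHaarMeasure] {a : ℝ} {f : E → ℝ}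

theorem integrable_secondDiff_mul_rpow (ha : finrank ℝ E < a) (ha' : a < finrank ℝ E + 2)
    (hf : ContDiff ℝ 2 f) (hc : HasCompactSupport f) (x : E) :
    Integrable fun h => secondDiff f h x * ‖h‖ ^ (-a) := by
  obtain ⟨B, -, hB⟩ := exists_abs_secondDiff_le hf hc
  have hcont : Continuous fun h => secondDiff f h x :=
    (continuous_secondDiff hf.continuous).comp (.prodMk_left x)
  refine ((integrable_min_one_normSq_mul_rpow ha ha').const_mul B).mono'
    (hcont.measurable.mul (by fun_prop)).aestronglyMeasurable (.of_forall fun h => ?_)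
  rw [norm_mul, Real.norm_of_nonneg (Real.rpow_nonneg (norm_nonneg h) _), ← mul_assoc]
  exact mul_le_mul_of_nonneg_right (hB h x) (by positivity)

theorem integrable_abs_secondDiff_mul_rpow (ha : finrank ℝ E < a) (ha' : a < finrank ℝ E + 2)
    (hf : ContDiff ℝ 2 f) (hc : HasCompactSupport f) (x : E) :
    Integrable fun h => |secondDiff f h x| * ‖h‖ ^ (-a) := by
  refine (integrable_secondDiff_mul_rpow ha ha' hf hc x).abs.congr (.of_forall fun h => ?_)
  simp only [abs_mul, abs_of_nonneg (Real.rpow_nonneg (norm_nonneg h) _)]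

theorem integral_abs_secondDiff_mul_rpow_le_of_lt_norm (ha : finrank ℝ E < a)
    (ha' : a < finrank ℝ E + 2) (hf : ContDiff ℝ 2 f) (hc : HasCompactSupport f) {r : ℝ}
    (hr : 1 ≤ r) (hfr : ∀ y, r < ‖y‖ → f y = 0) {x : E} (hx : 2 * r < ‖x‖) :
    ∫ h, |secondDiff f h x| * ‖h‖ ^ (-a) ≤
      2 * (∫ y, |f y|) * 4 ^ a * (1 + ‖x‖) ^ (-a) := by
  have hf_int : Integrable f := hf.continuous.integrable_of_hasCompactSupport hc
  have hadd : Integrable fun h => |f (x + h)| := (hf_int.comp_add_left x).abs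
  have hsub : Integrable fun h => |f (x - h)| := (hf_int.comp_sub_left x).abs
  have hpt (h : E) : |secondDiff f h x| * ‖h‖ ^ (-a) ≤
      (|f (x + h)| + |f (x - h)|) * (4 ^ a * (1 + ‖x‖) ^ (-a)) := by
    by_cases hne : secondDiff f h x = 0
    · rw [hne, abs_zero, zero_mul]; positivity
    have hxh : 1 + ‖x‖ ≤ 4 * ‖h‖ := by
      linarith [norm_le_of_secondDiff_ne_zero hfr (by linarith) hne]
    have hdiff : |secondDiff f h x| ≤ |f (x + h)| + |f (x - h)| := by
      rw [secondDiff, hfr x (by linarith), mul_zero, zero_sub, ← neg_add', abs_neg]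
      exact abs_add_le _ _
    have hker : ‖h‖ ^ (-a) ≤ 4 ^ a * (1 + ‖x‖) ^ (-a) := by
      have : (1 + ‖x‖) / 4 ≤ ‖h‖ := by linarith
      calc ‖h‖ ^ (-a) ≤ ((1 + ‖x‖) / 4) ^ (-a) :=
            Real.rpow_le_rpow_of_nonpos (by positivity) this (by linarith)
        _ = 4 ^ a * (1 + ‖x‖) ^ (-a) := by
            rw [Real.div_rpow (by positivity) (by norm_num),
              Real.rpow_neg (by norm_num : (0 : ℝ) ≤ 4), div_inv_eq_mul, mul_comm]
    gcongr
  calc ∫ h, |secondDiff f h x| * ‖h‖ ^ (-a)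
      ≤ ∫ h, (|f (x + h)| + |f (x - h)|) * (4 ^ a * (1 + ‖x‖) ^ (-a)) :=
        integral_mono (integrable_abs_secondDiff_mul_rpow ha ha' hf hc x)
          ((hadd.add hsub).mul_const _) hpt
    _ = 2 * (∫ y, |f y|) * 4 ^ a * (1 + ‖x‖) ^ (-a) := by
        rw [integral_mul_const, integral_add hadd hsub,
          integral_add_left_eq_self (fun y => |f y|) x,
          integral_sub_left_eq_self (fun y => |f y|) volume x]
        ring

theorem exists_integral_abs_secondDiff_mul_rpow_le (ha : finrank ℝ E < a)
    (ha' : a < finrank ℝ E + 2) (hf : ContDiff ℝ 2 f) (hc : HasCompactSupport f) :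
    ∃ B, 0 ≤ B ∧ ∀ x, ∫ h, |secondDiff f h x| * ‖h‖ ^ (-a) ≤ B * (1 + ‖x‖) ^ (-a) := by
  have ha0 : 0 ≤ a := (Nat.cast_nonneg _).trans ha.le
  obtain ⟨B, hB0, hB⟩ := exists_abs_secondDiff_le hf hc
  obtain ⟨r, hr, hfr⟩ : ∃ r : ℝ, 1 ≤ r ∧ ∀ y, r < ‖y‖ → f y = 0 := by
    obtain ⟨r, hr⟩ := hc.isCompact.isBounded.subset_closedBall (0 : E)
    refine ⟨max r 1, le_max_right _ _, fun y hy => image_eq_zero_of_notMem_tsupport fun hy' => ?_⟩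
    exact ((le_max_left _ _).trans_lt hy).not_ge (mem_closedBall_zero_iff.1 (hr hy'))
  set J := ∫ h : E, min 1 (‖h‖ ^ 2) * ‖h‖ ^ (-a)
  refine ⟨B * J * (1 + 2 * r) ^ a + 2 * (∫ y, |f y|) * 4 ^ a, by positivity, fun x => ?_⟩
  rw [add_mul]
  rcases le_or_gt ‖x‖ (2 * r) with hx | hx
  · refine le_add_of_le_of_nonneg ?_ (by positivity)
    calc ∫ h, |secondDiff f h x| * ‖h‖ ^ (-a)
        ≤ ∫ h : E, B * (min 1 (‖h‖ ^ 2) * ‖h‖ ^ (-a)) := by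
          refine integral_mono (integrable_abs_secondDiff_mul_rpow ha ha' hf hc x)
            ((integrable_min_one_normSq_mul_rpow ha ha').const_mul B) fun h => ?_
          dsimp only
          rw [← mul_assoc]
          exact mul_le_mul_of_nonneg_right (hB h x) (by positivity)
      _ = B * J := integral_const_mul _ _
      _ ≤ B * J * (1 + 2 * r) ^ a * (1 + ‖x‖) ^ (-a) := by
          rw [mul_assoc]
          refine le_mul_of_one_le_right (by positivity) ?_
          rw [Real.rpow_neg (by positivity), ← div_eq_mul_inv, one_le_div (by positivity)]
          gcongr
  · exact le_add_of_nonneg_of_le (by positivity)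
      (integral_abs_secondDiff_mul_rpow_le_of_lt_norm ha ha' hf hc hr hfr hx)

/-- The weight `R ^ d * (R + ‖x‖) ^ (-a)`, of the size of the fractional Laplacian (for
`a = d + 2 * s`) at `x` of a bump at scale `R`. -/
noncomputable def decayWeight (a R : ℝ) (x : E) : ℝ :=
  R ^ finrank ℝ E * (R + ‖x‖) ^ (-a)

theorem exists_integral_abs_secondDiff_comp_inv_smul_le (ha : finrank ℝ E < a)
    (ha' : a < finrank ℝ E + 2) (hf : ContDiff ℝ 2 f) (hc : HasCompactSupport f) :
    ∃ B, 0 ≤ B ∧ ∀ R : ℝ, 0 < R → ∀ x,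
      ∫ h, |secondDiff (fun y => f (R⁻¹ • y)) h x| * ‖h‖ ^ (-a) ≤ B * decayWeight a R x := by
  obtain ⟨B, hB, hb⟩ := exists_integral_abs_secondDiff_mul_rpow_le ha ha' hf hc
  refine ⟨B, hB, fun R hR x => ?_⟩
  have hscale : R ^ (-a) * (1 + ‖R⁻¹ • x‖) ^ (-a) = (R + ‖x‖) ^ (-a) := by
    rw [← Real.mul_rpow hR.le (by positivity), norm_smul, Real.norm_of_nonneg (by positivity)]
    congr 1; field_simp
  calc ∫ h, |secondDiff (fun y => f (R⁻¹ • y)) h x| * ‖h‖ ^ (-a)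
      = R ^ finrank ℝ E * (R ^ (-a) * ∫ h, |secondDiff f h (R⁻¹ • x)| * ‖h‖ ^ (-a)) := by
        simp only [secondDiff_comp_inv_smul_mul_rpow f a hR]
        rw [Measure.integral_comp_smul volume
          (fun h => R ^ (-a) * (|secondDiff f h (R⁻¹ • x)| * ‖h‖ ^ (-a))) R⁻¹, integral_const_mul,
          smul_eq_mul, inv_pow, inv_inv, abs_of_pos (by positivity)]
    _ ≤ R ^ finrank ℝ E * (R ^ (-a) * (B * (1 + ‖R⁻¹ • x‖) ^ (-a))) := by
        gcongr; exact hb _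
    _ = B * decayWeight a R x := by rw [decayWeight, ← hscale]; ring

end Decay

/-! ### The fractional Laplacian of a test function -/

section PrincipalValue

variable {E : Type*} [NormedAddCommGroup E] [NormedSpace ℝ E] [FiniteDimensional ℝ E]
  [MeasureSpace E] [BorelSpace E] [(volume : Measure E).IsAddHaarMeasure] {a : ℝ} {f : E → ℝ}

theorem integrableOn_sub_mul_rpow (ha : finrank ℝ E < a) (hf : Continuous f)
    (hc : HasCompactSupport f) (x : E) {ε : ℝ} (hε : 0 < ε) :
    IntegrableOn (fun h => (f x - f (x + h)) * ‖h‖ ^ (-a)) (ball 0 ε)ᶜ := by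
  obtain ⟨M, hM⟩ := hc.exists_bound_of_continuous hf
  refine (integrableOn_compl_ball_norm_rpow ha hε).bdd_mul (c := M + M)
    (Continuous.aestronglyMeasurable (by fun_prop)) (.of_forall fun h => ?_)
  exact (norm_sub_le _ _).trans (add_le_add (hM _) (hM _))

theorem setIntegral_sub_div_dist_rpow (ha : finrank ℝ E < a) (hf : Continuous f)
    (hc : HasCompactSupport f) (x : E) {ε : ℝ} (hε : 0 < ε) :
    ∫ y in {y | ε ≤ dist x y}, (f x - f y) / dist x y ^ a =
      1 / 2 * ∫ h in (ball 0 ε)ᶜ, secondDiff f h x * ‖h‖ ^ (-a) := by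
  set g : E → ℝ := fun h => (f x - f (x + h)) * ‖h‖ ^ (-a) with hg
  have hg_int : IntegrableOn g (ball 0 ε)ᶜ := integrableOn_sub_mul_rpow ha hf hc x hε
  have hneg : MeasurePreserving (Neg.neg : E → E) := Measure.measurePreserving_neg _
  have hneg_pre : (Neg.neg : E → E) ⁻¹' (ball 0 ε)ᶜ = (ball 0 ε)ᶜ := by ext; simp
  have hneg_emb : MeasurableEmbedding (Neg.neg : E → E) := measurableEmbedding_neg
  have htranslate : ∫ y in {y | ε ≤ dist x y}, (f x - f y) / dist x y ^ a =
      ∫ h in (ball 0 ε)ᶜ, g h := by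
    rw [← (measurePreserving_add_left volume x).setIntegral_preimage_emb
      (measurableEmbedding_addLeft x)]
    have hpre : (x + ·) ⁻¹' {y | ε ≤ dist x y} = (ball 0 ε)ᶜ := by ext; simp
    rw [hpre]
    simp only [hg, dist_self_add_right, Real.rpow_neg (norm_nonneg _), div_eq_mul_inv]
  have hreflect : ∫ h in (ball 0 ε)ᶜ, g (-h) = ∫ h in (ball 0 ε)ᶜ, g h := by
    simpa only [hneg_pre] using hneg.setIntegral_preimage_emb hneg_emb g (ball 0 ε)ᶜ
  have hg_neg_int : IntegrableOn (fun h => g (-h)) (ball 0 ε)ᶜ := by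
    simpa only [hneg_pre, Function.comp_def] using
      (hneg.integrableOn_comp_preimage hneg_emb).2 hg_int
  have hsum (h : E) : secondDiff f h x * ‖h‖ ^ (-a) = g h + g (-h) := by
    simp only [hg, secondDiff, norm_neg, ← sub_eq_add_neg]; ring
  simp only [hsum]
  rw [integral_add hg_int hg_neg_int, hreflect, htranslate]
  ring

theorem tendsto_setIntegral_sub_div_dist_rpow [Nontrivial E] (ha : finrank ℝ E < a)
    (ha' : a < finrank ℝ E + 2) (hf : ContDiff ℝ 2 f) (hc : HasCompactSupport f) (x : E) :
    Tendsto (fun ε => ∫ y in {y | ε ≤ dist x y}, (f x - f y) / dist x y ^ a) (𝓝[>] 0)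
      (𝓝 (1 / 2 * ∫ h, secondDiff f h x * ‖h‖ ^ (-a))) := by
  have hcover : AECover (volume : Measure E) (𝓝[>] (0 : ℝ)) fun ε => (ball 0 ε)ᶜ := by
    refine ⟨?_, fun ε => measurableSet_ball.compl⟩
    filter_upwards [compl_mem_ae_iff.2 (measure_singleton (0 : E))] with h hh
    filter_upwards [nhdsWithin_le_nhds (eventually_lt_nhds (norm_pos_iff.2 hh))] with ε hε
    simpa using hε.le
  refine ((hcover.integral_tendsto_of_countably_generated
    (integrable_secondDiff_mul_rpow ha ha' hf hc x)).const_mul (1 / 2)).congr' ?_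
  filter_upwards [self_mem_nhdsWithin] with ε hε
  exact (setIntegral_sub_div_dist_rpow ha hf.continuous hc x hε).symm

theorem integrable_prod_mul_secondDiff_mul_rpow (ha : finrank ℝ E < a)
    (ha' : a < finrank ℝ E + 2) {φ : E → ℝ} (hφ : ContDiff ℝ 2 φ) (hc : HasCompactSupport φ)
    (hf : AEStronglyMeasurable f) (hfi : Integrable fun x => f x * (1 + ‖x‖) ^ (-a)) :
    Integrable (fun z : E × E => f z.1 * (secondDiff φ z.2 z.1 * ‖z.2‖ ^ (-a)))
      (volume.prod volume) := by
  obtain ⟨B, -, hb⟩ := exists_integral_abs_secondDiff_mul_rpow_le ha ha' hφ hc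
  have hdiff : Measurable fun z : E × E => secondDiff φ z.2 z.1 :=
    ((continuous_secondDiff hφ.continuous).comp continuous_swap).measurable
  have hmeas : AEStronglyMeasurable (fun z : E × E =>
      f z.1 * (secondDiff φ z.2 z.1 * ‖z.2‖ ^ (-a))) (volume.prod volume) :=
    hf.comp_fst.mul (hdiff.mul (by fun_prop)).aestronglyMeasurable
  refine (integrable_prod_iff hmeas).2 ⟨.of_forall fun x =>
    (integrable_secondDiff_mul_rpow ha ha' hφ hc x).const_mul (f x), ?_⟩
  refine (hfi.abs.const_mul B).mono' hmeas.norm.integral_prod_right' (.of_forall fun x => ?_)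
  have hrpow (y : E) : 0 ≤ ‖y‖ ^ (-a) := Real.rpow_nonneg (norm_nonneg y) _
  rw [Real.norm_of_nonneg (integral_nonneg fun h => norm_nonneg _)]
  simp only [norm_mul, Real.norm_eq_abs, abs_of_nonneg (hrpow _), integral_const_mul, abs_mul]
  rw [abs_of_nonneg (by positivity : 0 ≤ (1 + ‖x‖) ^ (-a)), mul_left_comm]
  exact mul_le_mul_of_nonneg_left (hb x) (abs_nonneg _)

end PrincipalValue

section FracLap

variable {d : ℕ} [NeZero d] {s : ℝ}

theorem fracLap_eq_integral_secondDiff (hs : s ∈ Ioo (0 : ℝ) 1) (Cds : ℝ) {φ : Ed d → ℝ}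
    (hφ : ContDiff ℝ 2 φ) (hc : HasCompactSupport φ) (x : Ed d) :
    fracLap d s Cds φ x = Cds / 2 * ∫ h, secondDiff φ h x * ‖h‖ ^ (-(d + 2 * s)) := by
  have hlim : Tendsto (fracLapTrunc d s φ x) (𝓝[>] 0)
      (𝓝 (1 / 2 * ∫ h, secondDiff φ h x * ‖h‖ ^ (-(d + 2 * s)))) :=
    tendsto_setIntegral_sub_div_dist_rpow (by simp [hs.1]) (by simp [hs.2]) hφ hc x
  rw [fracLap, hlim.limUnder_eq]
  ring

theorem integral_mul_fracLap (hs : s ∈ Ioo (0 : ℝ) 1) (Cds : ℝ) {φ : Ed d → ℝ}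
    (hφ : ContDiff ℝ 2 φ) (hc : HasCompactSupport φ) {f : Ed d → ℝ} (hf : AEStronglyMeasurable f)
    (hfi : Integrable fun x => f x * (1 + ‖x‖) ^ (-(d + 2 * s))) :
    ∫ x, f x * fracLap d s Cds φ x =
      Cds / 2 * ∫ h, (∫ x, f x * secondDiff φ h x) * ‖h‖ ^ (-(d + 2 * s)) := by
  have hint := integrable_prod_mul_secondDiff_mul_rpow (a := d + 2 * s) (by simp [hs.1])
    (by simp [hs.2]) hφ hc hf hfi
  calc ∫ x, f x * fracLap d s Cds φ x
      = Cds / 2 * ∫ x, ∫ h, f x * (secondDiff φ h x * ‖h‖ ^ (-(d + 2 * s))) := by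
        rw [← integral_const_mul]
        congr 1 with x
        rw [fracLap_eq_integral_secondDiff hs Cds hφ hc, integral_const_mul]
        ring
    _ = Cds / 2 * ∫ h, (∫ x, f x * secondDiff φ h x) * ‖h‖ ^ (-(d + 2 * s)) := by
        rw [integral_integral_swap hint]
        simp only [← mul_assoc, integral_mul_const]

end FracLap

/-! ### Mollification -/

section BumpConv

variable {E : Type*} [NormedAddCommGroup E] [NormedSpace ℝ E] [FiniteDimensional ℝ E]
  [MeasureSpace E] (b : ContDiffBump (0 : E)) {f g : E → ℝ}

/-- The mollification of `f` by the normalised bump function `b`. -/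
noncomputable def bumpConv (f : E → ℝ) : E → ℝ :=
  convolution (b.normed volume) f (ContinuousLinearMap.lsmul ℝ ℝ) volume

theorem bumpConv_apply (f : E → ℝ) (x : E) :
    bumpConv b f x = ∫ y, b.normed volume y * f (x - y) := rfl

/-- The probability measure with density the normalised bump function `b`. -/
noncomputable def bumpMeasure : Measure E :=
  volume.withDensity fun y => ENNReal.ofReal (b.normed volume y)

variable [BorelSpace E]

theorem lintegral_bumpMeasure (g : E → ℝ≥0∞) :
    ∫⁻ y, g y ∂bumpMeasure b = ∫⁻ y, ENNReal.ofReal (b.normed volume y) * g y :=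
  lintegral_withDensity_eq_lintegral_mul_non_measurable _
    b.continuous_normed.measurable.ennreal_ofReal (.of_forall fun _ => ENNReal.ofReal_lt_top) _

theorem bumpConv_eq_integral_bumpMeasure (f : E → ℝ) (x : E) :
    bumpConv b f x = ∫ y, f (x - y) ∂bumpMeasure b := by
  rw [bumpMeasure, integral_withDensity_eq_integral_toReal_smul
    b.continuous_normed.measurable.ennreal_ofReal (.of_forall fun _ => ENNReal.ofReal_lt_top)]
  simp only [ENNReal.toReal_ofReal (b.nonneg_normed _), smul_eq_mul, bumpConv_apply]

variable [(volume : Measure E).IsAddHaarMeasure]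

theorem bumpConv_apply_swap (f : E → ℝ) (x : E) :
    bumpConv b f x = ∫ y, b.normed volume (x - y) * f y :=
  convolution_eq_swap _

theorem contDiff_bumpConv (hf : LocallyIntegrable f) {n : ℕ∞} : ContDiff ℝ n (bumpConv b f) :=
  b.hasCompactSupport_normed.contDiff_convolution_left _ b.contDiff_normed hf

theorem continuous_bumpConv (hf : LocallyIntegrable f) : Continuous (bumpConv b f) :=
  (contDiff_bumpConv b hf (n := 0)).continuous

theorem hasCompactSupport_bumpConv (hf : HasCompactSupport f) :
    HasCompactSupport (bumpConv b f) :=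
  b.hasCompactSupport_normed.convolution _ hf

theorem convolutionExistsAt_normed (hf : LocallyIntegrable f) (x : E) :
    ConvolutionExistsAt (b.normed volume) f x (ContinuousLinearMap.lsmul ℝ ℝ) volume :=
  b.hasCompactSupport_normed.convolutionExists_left _ b.continuous_normed hf x

theorem secondDiff_bumpConv (hf : LocallyIntegrable f) (h : E) :
    secondDiff (bumpConv b f) h = bumpConv b (secondDiff f h) := by
  have hint (x : E) : Integrable fun y => b.normed volume y * f (x - y) :=
    convolutionExistsAt_normed b hf x
  ext x
  simp only [secondDiff, bumpConv_apply]
  rw [← integral_const_mul, ← integral_sub' ((hint x).const_mul 2) (hint (x + h)),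
    ← integral_sub' (((hint x).const_mul 2).sub (hint (x + h))) (hint (x - h))]
  congr 1 with y
  simp only [Pi.sub_apply]
  rw [sub_add_eq_add_sub, sub_right_comm x y h]
  ring

theorem integrable_prod_normed_sub_mul_mul (hf : LocallyIntegrable f) (hg : Continuous g)
    (hgc : HasCompactSupport g) :
    Integrable (fun z : E × E => b.normed volume (z.2 - z.1) * f z.1 * g z.2)
      (volume.prod volume) := by
  have hmeas : AEStronglyMeasurable (fun z : E × E => b.normed volume (z.2 - z.1) * f z.1 * g z.2)
      (volume.prod volume) :=
    ((b.continuous_normed.comp (by fun_prop)).aestronglyMeasurable.mul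
      hf.aestronglyMeasurable.comp_fst).mul (hg.comp continuous_snd).aestronglyMeasurable
  refine (integrable_prod_iff' hmeas).2 ⟨.of_forall fun y =>
    (convolutionExistsAt_normed b hf y).integrable_swap.mul_const (g y), ?_⟩
  have hnorm : (fun y => ∫ x, ‖b.normed volume (y - x) * f x * g y‖) =
      fun y => bumpConv b (fun x => ‖f x‖) y * ‖g y‖ := by
    ext y
    simp only [norm_mul, integral_mul_const, bumpConv_apply_swap,
      Real.norm_of_nonneg (b.nonneg_normed _)]
  rw [hnorm]
  exact ((continuous_bumpConv b fun x => (hf x).norm).mul hg.norm).integrable_of_hasCompactSupport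
    hgc.norm.mul_left

theorem integral_mul_bumpConv (hf : LocallyIntegrable f) (hg : Continuous g)
    (hgc : HasCompactSupport g) :
    ∫ x, f x * bumpConv b g x = ∫ x, bumpConv b f x * g x := by
  calc ∫ x, f x * bumpConv b g x
      = ∫ x, ∫ y, b.normed volume (y - x) * f x * g y := by
        congr 1 with x
        rw [bumpConv_apply_swap, ← integral_const_mul]
        congr 1 with y
        rw [← b.normed_neg, neg_sub]
        ring
    _ = ∫ y, ∫ x, b.normed volume (y - x) * f x * g y :=
        integral_integral_swap (integrable_prod_normed_sub_mul_mul b hf hg hgc)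
    _ = ∫ x, bumpConv b f x * g x := by
        simp only [integral_mul_const, bumpConv_apply_swap]

instance : IsProbabilityMeasure (bumpMeasure b) where
  measure_univ := by
    rw [bumpMeasure, withDensity_apply _ .univ, Measure.restrict_univ,
      ← ofReal_integral_eq_lintegral_ofReal b.integrable_normed (.of_forall b.nonneg_normed),
      b.integral_normed, ENNReal.ofReal_one]

theorem ae_bumpMeasure_norm_lt_rOut : ∀ᵐ y ∂bumpMeasure b, ‖y‖ < b.rOut := by
  refine (ae_withDensity_iff b.continuous_normed.measurable.ennreal_ofReal).2
    (.of_forall fun y hy => ?_)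
  have hmem : y ∈ Function.support (b.normed volume) := fun h0 => hy (by simp [h0])
  simpa [b.support_normed_eq] using hmem

end BumpConv

/-! ### The localised Gagliardo energy -/

section LocalEnergy

variable {E : Type*} [NormedAddCommGroup E] [MeasureSpace E] {a : ℝ} {u χ : E → ℝ}

/-- The Gagliardo energy `∬ (u x - u y) ^ 2 / ‖x - y‖ ^ a`, localised by the cutoff `χ`
symmetrised in `x` and `y`. -/
noncomputable def localEnergy (a : ℝ) (u χ : E → ℝ) : ℝ≥0∞ :=
  ∫⁻ z : E × E, ENNReal.ofReal
    ((u z.1 - u z.2) ^ 2 * ((χ z.1 + χ z.2) / 2) * ‖z.1 - z.2‖ ^ (-a))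

theorem localEnergy_one (a : ℝ) (u : E → ℝ) :
    localEnergy a u 1 = ∫⁻ z : E × E, ENNReal.ofReal ((u z.1 - u z.2) ^ 2 / dist z.1 z.2 ^ a) := by
  simp only [localEnergy, Pi.one_apply, add_self_div_two, mul_one, dist_eq_norm,
    Real.rpow_neg (norm_nonneg _), ← div_eq_mul_inv]

variable [BorelSpace E]

theorem integrable_sq_sub_mul_cutoff [IsFiniteMeasureOnCompacts (volume : Measure E)]
    (hu : Continuous u) (hχ : Continuous χ) (hc : HasCompactSupport χ) (h : E) :
    Integrable fun x => (u x - u (x + h)) ^ 2 * ((χ x + χ (x + h)) / 2) := by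
  refine Continuous.integrable_of_hasCompactSupport (by fun_prop) (.mul_left ?_)
  exact (hc.add (hc.comp_homeomorph (Homeomorph.addRight h))).mul_right
    (f' := fun _ => (2 : ℝ)⁻¹)

theorem integral_mul_secondDiff_mul [(volume : Measure E).IsAddHaarMeasure]
    (hu : Continuous u) (hχ : Continuous χ) (hc : HasCompactSupport χ) (h : E) :
    ∫ x, u x * secondDiff (χ * u) h x =
      (∫ x, (u x - u (x + h)) ^ 2 * ((χ x + χ (x + h)) / 2)) +
        1 / 2 * ∫ x, u x ^ 2 * secondDiff χ h x := by
  have hcont (f : E → ℝ) (hf : Continuous f) : Continuous (secondDiff f h) :=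
    (continuous_secondDiff hf).comp (.prodMk_right h)
  -- the two integrands differ by the increment `F (x + h) - F x`
  set F : E → ℝ := fun x => (u x ^ 2 * χ x + u x ^ 2 * χ (x - h)) / 2 - u x * u (x - h) * χ (x - h)
    with hF
  have hF_int : Integrable F := by
    have hsub : HasCompactSupport fun x => χ (x - h) := hc.comp_homeomorph (Homeomorph.subRight h)
    refine Continuous.integrable_of_hasCompactSupport (by fun_prop) ?_
    exact ((hc.mul_left.add hsub.mul_left).mul_right (f' := fun _ => (2 : ℝ)⁻¹)).sub hsub.mul_left
  have hu_int : Integrable fun x => u x * secondDiff (χ * u) h x :=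
    (hu.mul (hcont _ (hχ.mul hu))).integrable_of_hasCompactSupport
      (hasCompactSupport_secondDiff hc.mul_right h).mul_left
  have hχ_int : Integrable fun x => u x ^ 2 * secondDiff χ h x :=
    ((hu.pow 2).mul (hcont _ hχ)).integrable_of_hasCompactSupport
      (hasCompactSupport_secondDiff hc h).mul_left
  have hpt (x : E) : u x * secondDiff (χ * u) h x + (F (x + h) - F x) =
      (u x - u (x + h)) ^ 2 * ((χ x + χ (x + h)) / 2) + 1 / 2 * (u x ^ 2 * secondDiff χ h x) := by
    simp only [hF, secondDiff, Pi.mul_apply, add_sub_cancel_right]; ring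
  have hincr_int : Integrable fun x => F (x + h) - F x := (hF_int.comp_add_right h).sub hF_int
  have hF_zero : ∫ x, (F (x + h) - F x) = 0 := by
    rw [integral_sub (hF_int.comp_add_right h) hF_int, integral_add_right_eq_self, sub_self]
  calc ∫ x, u x * secondDiff (χ * u) h x
      = ∫ x, (u x * secondDiff (χ * u) h x + (F (x + h) - F x)) := by
        rw [integral_add hu_int hincr_int, hF_zero, add_zero]
    _ = _ := by
        simp only [hpt]
        rw [integral_add (integrable_sq_sub_mul_cutoff hu hχ hc h) (hχ_int.const_mul _),
          integral_const_mul]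

variable [NormedSpace ℝ E] [FiniteDimensional ℝ E]

theorem localEnergy_le_liminf {v : E → ℝ} {u χ : ℕ → E → ℝ} {χ' : E → ℝ}
    (hu : ∀ n, Measurable (u n)) (hχ : ∀ n, Measurable (χ n))
    (huv : ∀ᵐ x, Tendsto (fun n => u n x) atTop (𝓝 (v x)))
    (hχ' : ∀ x, Tendsto (fun n => χ n x) atTop (𝓝 (χ' x))) :
    localEnergy a v χ' ≤ liminf (fun n => localEnergy a (u n) (χ n)) atTop := by
  have hmeas (n : ℕ) : Measurable fun z : E × E => ENNReal.ofReal
      ((u n z.1 - u n z.2) ^ 2 * ((χ n z.1 + χ n z.2) / 2) * ‖z.1 - z.2‖ ^ (-a)) := by fun_prop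
  refine le_trans (lintegral_mono_ae ?_) (lintegral_liminf_le hmeas)
  filter_upwards [Measure.quasiMeasurePreserving_fst.ae huv,
    Measure.quasiMeasurePreserving_snd.ae huv] with z h₁ h₂
  exact (ENNReal.tendsto_ofReal ((((h₁.sub h₂).pow 2).mul
    (((hχ' z.1).add (hχ' z.2)).div_const 2)).mul_const _)).liminf_eq.ge

variable [(volume : Measure E).IsAddHaarMeasure]

theorem localEnergy_eq_lintegral_lintegral_add (hu : Measurable u) (hχ : Measurable χ) :
    localEnergy a u χ = ∫⁻ h, ∫⁻ x, ENNReal.ofReal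
      ((u x - u (x + h)) ^ 2 * ((χ x + χ (x + h)) / 2) * ‖h‖ ^ (-a)) := by
  have hmeas : Measurable fun z : E × E => ENNReal.ofReal
      ((u z.1 - u z.2) ^ 2 * ((χ z.1 + χ z.2) / 2) * ‖z.1 - z.2‖ ^ (-a)) := by fun_prop
  rw [localEnergy, Measure.volume_eq_prod, lintegral_prod _ hmeas.aemeasurable]
  calc _ = ∫⁻ x, ∫⁻ h, ENNReal.ofReal
        ((u x - u (x + h)) ^ 2 * ((χ x + χ (x + h)) / 2) * ‖h‖ ^ (-a)) := by
        refine lintegral_congr fun x => ?_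
        rw [← lintegral_add_left_eq_self _ x]
        simp only [sub_add_cancel_left, norm_neg]
    _ = _ := lintegral_lintegral_swap (Measurable.aemeasurable (by fun_prop))

theorem localEnergy_eq_ofReal_integral (hu : Continuous u) (hχ : Continuous χ)
    (hc : HasCompactSupport χ) (hχ0 : ∀ x, 0 ≤ χ x)
    (hint : Integrable fun h =>
      (∫ x, (u x - u (x + h)) ^ 2 * ((χ x + χ (x + h)) / 2)) * ‖h‖ ^ (-a)) :
    localEnergy a u χ = ENNReal.ofReal
      (∫ h, (∫ x, (u x - u (x + h)) ^ 2 * ((χ x + χ (x + h)) / 2)) * ‖h‖ ^ (-a)) := by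
  have hnonneg (h x : E) : 0 ≤ (u x - u (x + h)) ^ 2 * ((χ x + χ (x + h)) / 2) :=
    mul_nonneg (sq_nonneg _) (div_nonneg (add_nonneg (hχ0 _) (hχ0 _)) zero_le_two)
  have hrpow (h : E) : 0 ≤ ‖h‖ ^ (-a) := Real.rpow_nonneg (norm_nonneg h) _
  rw [localEnergy_eq_lintegral_lintegral_add hu.measurable hχ.measurable,
    ofReal_integral_eq_lintegral_ofReal hint
      (.of_forall fun h => mul_nonneg (integral_nonneg (hnonneg h)) (hrpow h))]
  refine lintegral_congr fun h => ?_
  rw [← integral_mul_const, ofReal_integral_eq_lintegral_ofReal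
    ((integrable_sq_sub_mul_cutoff hu hχ hc h).mul_const _)
    (.of_forall fun x => mul_nonneg (hnonneg h x) (hrpow h))]

theorem integral_mul_secondDiff_bumpConv_mul (b : ContDiffBump (0 : E)) {v : E → ℝ}
    (hv : LocallyIntegrable v) (hχ : Continuous χ) (hc : HasCompactSupport χ) (h : E) :
    ∫ x, v x * secondDiff (bumpConv b (χ * bumpConv b v)) h x =
      (∫ x, (bumpConv b v x - bumpConv b v (x + h)) ^ 2 * ((χ x + χ (x + h)) / 2)) +
        1 / 2 * ∫ x, bumpConv b v x ^ 2 * secondDiff χ h x := by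
  have hu : Continuous (bumpConv b v) := continuous_bumpConv b hv
  have hψ : Continuous (χ * bumpConv b v) := hχ.mul hu
  have hD : Continuous (secondDiff (χ * bumpConv b v) h) :=
    (continuous_secondDiff hψ).comp (.prodMk_right h)
  rw [secondDiff_bumpConv b hψ.locallyIntegrable, integral_mul_bumpConv b hv hD
    (hasCompactSupport_secondDiff hc.mul_right h), integral_mul_secondDiff_mul hu hχ hc h]

theorem abs_integral_sq_mul_secondDiff_le (ha : finrank ℝ E < a) (ha' : a < finrank ℝ E + 2)
    (hu : Continuous u) (hui : Integrable fun x => u x ^ 2 * (1 + ‖x‖) ^ (-a))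
    (hχ : ContDiff ℝ 2 χ) (hc : HasCompactSupport χ) {W : E → ℝ}
    (hW : ∀ x, ∫ h, |secondDiff χ h x| * ‖h‖ ^ (-a) ≤ W x)
    (hWi : Integrable fun x => u x ^ 2 * W x) :
    |∫ h, (∫ x, u x ^ 2 * secondDiff χ h x) * ‖h‖ ^ (-a)| ≤ ∫ x, u x ^ 2 * W x := by
  have hint := integrable_prod_mul_secondDiff_mul_rpow ha ha' hχ hc
    (hu.pow 2).aestronglyMeasurable hui
  simp only [← integral_mul_const, mul_assoc]
  rw [← integral_integral_swap hint, ← Real.norm_eq_abs]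
  refine norm_integral_le_of_norm_le hWi (.of_forall fun x => ?_)
  rw [integral_const_mul, norm_mul, Real.norm_of_nonneg (sq_nonneg _)]
  refine mul_le_mul_of_nonneg_left (((norm_integral_le_integral_norm _).trans_eq ?_).trans (hW x))
    (sq_nonneg _)
  simp only [norm_mul, Real.norm_eq_abs, abs_of_nonneg (Real.rpow_nonneg (norm_nonneg _) (-a))]

end LocalEnergy

section EnergyEstimate

variable {d : ℕ} [NeZero d] {s Cds : ℝ} {v V χ : Ed d → ℝ}

theorem localEnergy_bumpConv_eq (hs : s ∈ Ioo (0 : ℝ) 1) (hC : 0 < Cds)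
    (hv : LocallyIntegrable v) (hvi : Integrable fun x => v x * (1 + ‖x‖) ^ (-(d + 2 * s)))
    (hV : IsDistFracLap d s Cds v V) (hχ : ContDiff ℝ (⊤ : ℕ∞) χ) (hc : HasCompactSupport χ)
    (hχ0 : ∀ x, 0 ≤ χ x) (b : ContDiffBump (0 : Ed d))
    (hui : Integrable fun x => bumpConv b v x ^ 2 * (1 + ‖x‖) ^ (-(d + 2 * s))) {I : ℝ}
    (hI : I = 2 / Cds * (∫ x, V x * bumpConv b (χ * bumpConv b v) x) -
      1 / 2 * ∫ h, (∫ x, bumpConv b v x ^ 2 * secondDiff χ h x) * ‖h‖ ^ (-(d + 2 * s))) :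
    0 ≤ I ∧ localEnergy (d + 2 * s) (bumpConv b v) χ = ENNReal.ofReal I := by
  set a : ℝ := d + 2 * s with ha_def
  have ha : finrank ℝ (Ed d) < a := by simp [ha_def, hs.1]
  have ha' : a < finrank ℝ (Ed d) + 2 := by simp [ha_def, hs.2]
  set u := bumpConv b v
  have hu : Continuous u := continuous_bumpConv b hv
  set φ := bumpConv b (χ * u)
  have hφ : ContDiff ℝ (⊤ : ℕ∞) φ := contDiff_bumpConv b (hχ.continuous.mul hu).locallyIntegrable
  have hφc : HasCompactSupport φ := hasCompactSupport_bumpConv b hc.mul_right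
  have hA_int := (integrable_prod_mul_secondDiff_mul_rpow ha ha' (contDiff_infty.1 hφ 2) hφc
    hv.aestronglyMeasurable hvi).integral_prod_right
  have hQ_int := (integrable_prod_mul_secondDiff_mul_rpow ha ha' (contDiff_infty.1 hχ 2) hc
    (hu.pow 2).aestronglyMeasurable hui).integral_prod_right
  simp only [← mul_assoc, integral_mul_const, Pi.pow_apply] at hA_int hQ_int
  have hP (h : Ed d) : (∫ x, (u x - u (x + h)) ^ 2 * ((χ x + χ (x + h)) / 2)) * ‖h‖ ^ (-a) =
      (∫ x, v x * secondDiff φ h x) * ‖h‖ ^ (-a) -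
        1 / 2 * ((∫ x, u x ^ 2 * secondDiff χ h x) * ‖h‖ ^ (-a)) := by
    rw [integral_mul_secondDiff_bumpConv_mul b hv hχ.continuous hc h]
    ring
  have hP_int := (hA_int.sub (hQ_int.const_mul (1 / 2))).congr (.of_forall fun h => (hP h).symm)
  have hcoef : 2 / Cds * (Cds / 2) = 1 := by field_simp
  have hI' : I = ∫ h, (∫ x, (u x - u (x + h)) ^ 2 * ((χ x + χ (x + h)) / 2)) * ‖h‖ ^ (-a) := by
    simp only [hP]
    rw [integral_sub hA_int (hQ_int.const_mul _), integral_const_mul, hI, ← hV φ hφ hφc,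
      integral_mul_fracLap hs Cds (contDiff_infty.1 hφ 2) hφc hv.aestronglyMeasurable hvi,
      ← mul_assoc, hcoef, one_mul]
  rw [hI', localEnergy_eq_ofReal_integral hu hχ.continuous hc hχ0 hP_int]
  refine ⟨integral_nonneg fun h => mul_nonneg (integral_nonneg fun x => ?_)
    (Real.rpow_nonneg (norm_nonneg h) _), rfl⟩
  exact mul_nonneg (sq_nonneg _) (div_nonneg (add_nonneg (hχ0 _) (hχ0 _)) zero_le_two)

theorem localEnergy_bumpConv_le (hs : s ∈ Ioo (0 : ℝ) 1) (hC : 0 < Cds)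
    (hv : LocallyIntegrable v) (hvi : Integrable fun x => v x * (1 + ‖x‖) ^ (-(d + 2 * s)))
    (hV : IsDistFracLap d s Cds v V) (hχ : ContDiff ℝ (⊤ : ℕ∞) χ) (hc : HasCompactSupport χ)
    (hχ0 : ∀ x, 0 ≤ χ x) (b : ContDiffBump (0 : Ed d))
    (hui : Integrable fun x => bumpConv b v x ^ 2 * (1 + ‖x‖) ^ (-(d + 2 * s)))
    {W : Ed d → ℝ} (hW : ∀ x, ∫ h, |secondDiff χ h x| * ‖h‖ ^ (-(d + 2 * s)) ≤ W x)
    (hWi : Integrable fun x => bumpConv b v x ^ 2 * W x) {K : ℝ}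
    (hK : K = 2 / Cds * (∫ x, V x * bumpConv b (χ * bumpConv b v) x) +
      1 / 2 * ∫ x, bumpConv b v x ^ 2 * W x) :
    0 ≤ K ∧ localEnergy (d + 2 * s) (bumpConv b v) χ ≤ ENNReal.ofReal K := by
  obtain ⟨hnonneg, henergy⟩ := localEnergy_bumpConv_eq hs hC hv hvi hV hχ hc hχ0 b hui rfl
  have hQ := abs_integral_sq_mul_secondDiff_le (by simp [hs.1]) (by simp [hs.2])
    (continuous_bumpConv b hv) hui (contDiff_infty.1 hχ 2) hc hW hWi
  refine ⟨hnonneg.trans ?_, henergy.trans_le (ENNReal.ofReal_le_ofReal ?_)⟩ <;>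
    linarith [(abs_le.1 hQ).1]

end EnergyEstimate

/-! ### Mollification in weighted Lebesgue spaces -/

section Jensen

variable {G : Type*} [MeasurableSpace G] {f : G → ℝ} {q : ℝ}

theorem enorm_integral_rpow_le {ν : Measure G} [IsProbabilityMeasure ν] (hq : 1 ≤ q)
    (hf : AEStronglyMeasurable f ν) : ‖∫ y, f y ∂ν‖ₑ ^ q ≤ ∫⁻ y, ‖f y‖ₑ ^ q ∂ν := by
  have hq0 : 0 < q := by linarith
  have hle : ‖∫ y, f y ∂ν‖ₑ ≤ eLpNorm' f q ν :=
    (enorm_integral_le_lintegral_enorm f).trans <| by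
      simpa only [eLpNorm', ENNReal.rpow_one, div_one]
        using eLpNorm'_le_eLpNorm'_of_exponent_le one_pos hq ν hf
  rw [lintegral_rpow_enorm_eq_rpow_eLpNorm' hq0]
  exact ENNReal.rpow_le_rpow hle hq0.le

theorem lintegral_enorm_integral_sub_rpow_mul_le [AddCommGroup G] [MeasurableAdd₂ G]
    [MeasurableSub₂ G] {μ ν : Measure G} [SFinite μ] [μ.IsAddRightInvariant]
    [IsProbabilityMeasure ν] (hq : 1 ≤ q) (hf : Measurable f) {m : G → ℝ≥0∞} (hm : Measurable m)
    {D : ℝ≥0∞} (hD : ∀ᵐ x ∂μ, ∫⁻ y, m (x + y) ∂ν ≤ D * m x) :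
    ∫⁻ x, ‖∫ y, f (x - y) ∂ν‖ₑ ^ q * m x ∂μ ≤ D * ∫⁻ x, ‖f x‖ₑ ^ q * m x ∂μ := by
  have hfq : Measurable fun x => ‖f x‖ₑ ^ q := hf.enorm.pow_const q
  calc ∫⁻ x, ‖∫ y, f (x - y) ∂ν‖ₑ ^ q * m x ∂μ
      ≤ ∫⁻ x, ∫⁻ y, ‖f (x - y)‖ₑ ^ q * m x ∂ν ∂μ := by
        refine lintegral_mono fun x => ?_
        have hfx : Measurable fun y => f (x - y) := hf.comp (measurable_const.sub measurable_id)
        rw [lintegral_mul_const _ (hfx.enorm.pow_const q)]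
        gcongr
        exact enorm_integral_rpow_le hq hfx.aestronglyMeasurable
    _ = ∫⁻ y, ∫⁻ x, ‖f (x - y)‖ₑ ^ q * m x ∂μ ∂ν := by
        refine lintegral_lintegral_swap (Measurable.aemeasurable ?_)
        exact (hfq.comp (measurable_fst.sub measurable_snd)).mul (hm.comp measurable_fst)
    _ = ∫⁻ y, ∫⁻ x, ‖f x‖ₑ ^ q * m (x + y) ∂μ ∂ν := by
        refine lintegral_congr fun y => ?_
        rw [← lintegral_add_right_eq_self _ y]
        simp only [add_sub_cancel_right]
    _ = ∫⁻ x, ∫⁻ y, ‖f x‖ₑ ^ q * m (x + y) ∂ν ∂μ := by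
        refine lintegral_lintegral_swap (Measurable.aemeasurable ?_)
        exact (hfq.comp measurable_snd).mul (hm.comp (measurable_snd.add measurable_fst))
    _ ≤ ∫⁻ x, D * (‖f x‖ₑ ^ q * m x) ∂μ := by
        refine lintegral_mono_ae ?_
        filter_upwards [hD] with x hx
        rw [lintegral_const_mul _ (show Measurable fun y => m (x + y) by fun_prop), mul_left_comm]
        gcongr
    _ = D * ∫⁻ x, ‖f x‖ₑ ^ q * m x ∂μ := lintegral_const_mul _ (hfq.mul hm)

end Jensen

section BumpA1

variable {E : Type*} [NormedAddCommGroup E] [NormedSpace ℝ E] [FiniteDimensional ℝ E]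
  [MeasureSpace E] {b : ContDiffBump (0 : E)} {m m' : E → ℝ≥0∞} {D K K' : ℝ≥0∞} {f : E → ℝ}

/-- The weight `m` satisfies the Muckenhoupt `A₁` condition with constant `D` at the scale of the
bump function `b`: its average around almost every `x` is at most `D * m x`. -/
def BumpA1 (b : ContDiffBump (0 : E)) (m : E → ℝ≥0∞) (D : ℝ≥0∞) : Prop :=
  ∀ᵐ x, ∫⁻ y, m (x + y) ∂bumpMeasure b ≤ D * m x

variable [BorelSpace E] [(volume : Measure E).IsAddHaarMeasure]

theorem bumpA1_one (b : ContDiffBump (0 : E)) : BumpA1 b 1 1 :=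
  .of_forall fun x => by simp only [Pi.one_apply, lintegral_one, measure_univ, mul_one, le_refl]

theorem BumpA1.mul (h : BumpA1 b m D) (hm' : ∀ x y, ‖y‖ ≤ b.rOut → m' (x + y) ≤ K * m' x)
    (hK : K ≠ ⊤) (htop : ∀ x, m' x ≠ ⊤) : BumpA1 b (m * m') (D * K) := by
  filter_upwards [h] with x hx
  calc ∫⁻ y, (m * m') (x + y) ∂bumpMeasure b
      ≤ ∫⁻ y, m (x + y) * (K * m' x) ∂bumpMeasure b := by
        refine lintegral_mono_ae ?_
        filter_upwards [ae_bumpMeasure_norm_lt_rOut b] with y hy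
        exact mul_le_mul_right (hm' x y hy.le) _
    _ = (∫⁻ y, m (x + y) ∂bumpMeasure b) * (K * m' x) :=
        lintegral_mul_const' _ _ (ENNReal.mul_ne_top hK (htop x))
    _ ≤ D * m x * (K * m' x) := by gcongr
    _ = D * K * (m * m') x := by rw [Pi.mul_apply]; ring

theorem BumpA1.of_comparable (h : BumpA1 b m D) (hle : ∀ᵐ x, m' x ≤ K * m x)
    (hge : ∀ᵐ x, m x ≤ K' * m' x) (hK : K ≠ ⊤) : BumpA1 b m' (K * D * K') := by
  have hac : bumpMeasure b ≪ volume := withDensity_absolutelyContinuous _ _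
  filter_upwards [h, hge] with x hx hx'
  have hle_x : ∀ᵐ y, m' (x + y) ≤ K * m (x + y) :=
    (quasiMeasurePreserving_add_left volume x).ae hle
  calc ∫⁻ y, m' (x + y) ∂bumpMeasure b
      ≤ ∫⁻ y, K * m (x + y) ∂bumpMeasure b := lintegral_mono_ae (hac.ae_le hle_x)
    _ = K * ∫⁻ y, m (x + y) ∂bumpMeasure b := lintegral_const_mul' _ _ hK
    _ ≤ K * (D * (K' * m' x)) := by gcongr; exact hx.trans (by gcongr)
    _ = K * D * K' * m' x := by ring

theorem bumpConv_congr_ae {g : E → ℝ} (b : ContDiffBump (0 : E)) (h : f =ᵐ[volume] g) :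
    bumpConv b f = bumpConv b g :=
  convolution_congr _ .rfl h

theorem BumpA1.lintegral_enorm_bumpConv_rpow_mul_le (h : BumpA1 b m D) (hm : Measurable m)
    {q : ℝ} (hq : 1 ≤ q) (hf : AEStronglyMeasurable f) :
    ∫⁻ x, ‖bumpConv b f x‖ₑ ^ q * m x ≤ D * ∫⁻ x, ‖f x‖ₑ ^ q * m x := by
  rw [bumpConv_congr_ae b hf.ae_eq_mk]
  simp only [bumpConv_eq_integral_bumpMeasure]
  refine (lintegral_enorm_integral_sub_rpow_mul_le hq hf.stronglyMeasurable_mk.measurable hm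
    h).trans_eq ?_
  congr 1
  refine lintegral_congr_ae ?_
  filter_upwards [hf.ae_eq_mk] with x hx
  rw [hx]

theorem BumpA1.eLpNorm_bumpConv_le (h : BumpA1 b m D) (hm : Measurable m) {p : ℝ≥0∞}
    (hp : 1 ≤ p) (hp' : p ≠ ⊤) (hf : LocallyIntegrable f) :
    eLpNorm (bumpConv b f) p (volume.withDensity m) ≤
      D ^ (1 / p.toReal) * eLpNorm f p (volume.withDensity m) := by
  have hp0 : p ≠ 0 := (one_pos.trans_le hp).ne'
  have hdens {g : E → ℝ} (hg : AEStronglyMeasurable g) :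
      ∫⁻ x, ‖g x‖ₑ ^ p.toReal ∂volume.withDensity m = ∫⁻ x, ‖g x‖ₑ ^ p.toReal * m x := by
    rw [lintegral_withDensity_eq_lintegral_mul₀ hm.aemeasurable (hg.enorm.pow_const _)]
    simp only [Pi.mul_apply, mul_comm]
  rw [eLpNorm_eq_lintegral_rpow_enorm_toReal hp0 hp',
    eLpNorm_eq_lintegral_rpow_enorm_toReal hp0 hp',
    ← ENNReal.mul_rpow_of_nonneg _ _ (by positivity), hdens hf.aestronglyMeasurable,
    hdens (continuous_bumpConv b hf).aestronglyMeasurable]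
  exact ENNReal.rpow_le_rpow (h.lintegral_enorm_bumpConv_rpow_mul_le hm
    (ENNReal.toReal_mono hp' hp) hf.aestronglyMeasurable) (by positivity)

end BumpA1

/-! ### Two-power weights -/

section PowerWeights

theorem rpow_le_two_rpow_abs_mul_rpow {t u : ℝ} (ht : 0 < t) (hu : 0 < u) (htu : t ≤ 2 * u)
    (hut : u ≤ 2 * t) (e : ℝ) : t ^ e ≤ 2 ^ |e| * u ^ e := by
  rcases le_total 0 e with he | he
  · rw [abs_of_nonneg he, ← Real.mul_rpow zero_le_two hu.le]
    exact Real.rpow_le_rpow ht.le htu he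
  · rw [abs_of_nonpos he, Real.rpow_neg zero_le_two, ← Real.inv_rpow zero_le_two,
      ← Real.mul_rpow (by positivity) hu.le]
    exact Real.rpow_le_rpow_of_nonpos (by positivity) (by linarith) he

section NormedGroup

variable {E : Type*} [NormedAddCommGroup E] {γ₀ γ : ℝ}

theorem half_norm_rpow_neg (γ₀ : ℝ) (x : E) : (‖x‖ / 2) ^ (-γ₀) = 2 ^ γ₀ * ‖x‖ ^ (-γ₀) := by
  rw [Real.div_rpow (norm_nonneg x) zero_le_two, Real.rpow_neg zero_le_two, div_inv_eq_mul,
    mul_comm]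

/-- The model weight equal to `‖x‖ ^ (-γ₀)` on the unit ball and to `‖x‖ ^ (-γ)` outside, written
as a product of a pure power and a slowly varying factor. -/
noncomputable def twoPower (γ₀ γ : ℝ) (x : E) : ℝ :=
  ‖x‖ ^ (-γ₀) * max 1 ‖x‖ ^ (γ₀ - γ)

theorem twoPower_of_norm_le_one {x : E} (hx : ‖x‖ ≤ 1) : twoPower γ₀ γ x = ‖x‖ ^ (-γ₀) := by
  rw [twoPower, max_eq_left hx, Real.one_rpow, mul_one]

theorem twoPower_of_one_lt_norm {x : E} (hx : 1 < ‖x‖) : twoPower γ₀ γ x = ‖x‖ ^ (-γ) := by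
  rw [twoPower, max_eq_right hx.le, ← Real.rpow_add (by linarith)]
  congr 1
  ring

theorem max_one_norm_rpow_le_twoPower (hγ₀ : 0 ≤ γ₀) {x : E} (hx : x ≠ 0) :
    max 1 ‖x‖ ^ (-γ) ≤ twoPower γ₀ γ x := by
  have hpos : 0 < max 1 ‖x‖ := one_pos.trans_le (le_max_left _ _)
  calc max 1 ‖x‖ ^ (-γ) = max 1 ‖x‖ ^ (-γ₀) * max 1 ‖x‖ ^ (γ₀ - γ) := by
        rw [← Real.rpow_add hpos]; congr 1; ring
    _ ≤ twoPower γ₀ γ x := mul_le_mul_of_nonneg_right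
        (Real.rpow_le_rpow_of_nonpos (norm_pos_iff.2 hx) (le_max_right _ _) (by linarith))
        (Real.rpow_nonneg hpos.le _)

theorem max_one_norm_add_rpow_le {x y : E} (hy : ‖y‖ ≤ 1) (e : ℝ) :
    max 1 ‖x + y‖ ^ e ≤ 2 ^ |e| * max 1 ‖x‖ ^ e := by
  have hpos (z : E) : 1 ≤ max 1 ‖z‖ := le_max_left _ _
  have hadd := norm_add_le x y
  have hsub : ‖x‖ ≤ ‖x + y‖ + ‖y‖ := norm_le_add_norm_add x y
  refine rpow_le_two_rpow_abs_mul_rpow (by linarith [hpos (x + y)]) (by linarith [hpos x])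
    (max_le ?_ ?_) (max_le ?_ ?_) e <;>
    linarith [hpos x, hpos (x + y), le_max_right 1 ‖x‖, le_max_right 1 ‖x + y‖]

theorem twoPowerWeight_ae_bounds {d : ℕ} {ρ : Ed d → ℝ} {c C : ℝ}
    (hw : TwoPowerWeight d ρ c C γ₀ γ) :
    ∀ᵐ x, c * twoPower γ₀ γ x ≤ ρ x ∧ ρ x ≤ C * twoPower γ₀ γ x := by
  filter_upwards [hw.2.2.1, hw.2.2.2] with x hnear hfar
  rcases le_or_gt ‖x‖ 1 with hx | hx
  · rw [twoPower_of_norm_le_one hx]; exact hnear hx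
  · rw [twoPower_of_one_lt_norm hx]; exact hfar hx

end NormedGroup

variable {E : Type*} [NormedAddCommGroup E] [NormedSpace ℝ E] [FiniteDimensional ℝ E]
  [MeasureSpace E] [BorelSpace E] [(volume : Measure E).IsAddHaarMeasure] {γ₀ γ : ℝ}

theorem setIntegral_ball_norm_rpow (e : ℝ) {r : ℝ} (hr : 0 < r) :
    ∫ x in ball (0 : E) r, ‖x‖ ^ e = r ^ (finrank ℝ E + e) * ∫ x in ball (0 : E) 1, ‖x‖ ^ e := by
  have hscale := Measure.setIntegral_comp_smul_of_pos volume (fun x : E => ‖x‖ ^ e) (ball 0 1) hr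
  simp only [norm_smul, Real.norm_of_nonneg hr.le, Real.mul_rpow hr.le (norm_nonneg _),
    integral_const_mul, smul_unitBall_of_pos hr, smul_eq_mul] at hscale
  rw [Real.rpow_add hr, Real.rpow_natCast, mul_assoc, hscale,
    mul_inv_cancel_left₀ (pow_pos hr _).ne']

theorem lintegral_bumpMeasure_add_le {b : ContDiffBump (0 : E)} {K : ℝ}
    (hb : b.rOut ≤ K * b.rIn) (g : E → ℝ≥0∞) {x : E} {r : ℝ} (hr : ‖x‖ + b.rOut ≤ r) :
    ∫⁻ y, g (x + y) ∂bumpMeasure b ≤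
      ENNReal.ofReal (K ^ finrank ℝ E / volume.real (closedBall (0 : E) b.rOut)) *
        ∫⁻ z in ball 0 r, g z := by
  rw [lintegral_bumpMeasure, ← lintegral_indicator measurableSet_ball,
    ← lintegral_add_left_eq_self ((ball 0 r).indicator g) x,
    ← lintegral_const_mul' _ _ ENNReal.ofReal_ne_top]
  refine lintegral_mono fun y => ?_
  by_cases hy : y ∈ Function.support (b.normed volume)
  · rw [b.support_normed_eq, mem_ball_zero_iff] at hy
    have hxy : x + y ∈ ball 0 r :=
      mem_ball_zero_iff.2 ((norm_add_le _ _).trans_lt (by linarith))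
    simp only [indicator_of_mem hxy]
    gcongr
    exact b.normed_le_div_measure_closedBall_rOut volume K hb y
  · simp only [Function.notMem_support.1 hy, ENNReal.ofReal_zero, zero_mul, zero_le]

theorem lintegral_bumpMeasure_norm_rpow_le_of_two_mul_rOut_le (hγ₀ : 0 ≤ γ₀)
    {b : ContDiffBump (0 : E)} {x : E} (hx : 2 * b.rOut ≤ ‖x‖) :
    ∫⁻ y, ENNReal.ofReal (‖x + y‖ ^ (-γ₀)) ∂bumpMeasure b ≤
      ENNReal.ofReal (2 ^ γ₀ * ‖x‖ ^ (-γ₀)) := by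
  have hpos := b.rOut_pos
  calc ∫⁻ y, ENNReal.ofReal (‖x + y‖ ^ (-γ₀)) ∂bumpMeasure b
      ≤ ∫⁻ _, ENNReal.ofReal (2 ^ γ₀ * ‖x‖ ^ (-γ₀)) ∂bumpMeasure b := by
        refine lintegral_mono_ae ?_
        filter_upwards [ae_bumpMeasure_norm_lt_rOut b] with y hy
        have hxy : ‖x‖ / 2 ≤ ‖x + y‖ := by linarith [norm_le_add_norm_add x y]
        rw [← half_norm_rpow_neg]
        exact ENNReal.ofReal_le_ofReal
          (Real.rpow_le_rpow_of_nonpos (by linarith) hxy (by linarith))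
    _ = ENNReal.ofReal (2 ^ γ₀ * ‖x‖ ^ (-γ₀)) := by rw [lintegral_const, measure_univ, mul_one]

theorem lintegral_bumpMeasure_norm_rpow_le_of_norm_le (hγ₀ : γ₀ ∈ Ico (0 : ℝ) (finrank ℝ E))
    {K : ℝ} {b : ContDiffBump (0 : E)} (hb : b.rOut ≤ K * b.rIn) {x : E} (hx₀ : x ≠ 0)
    (hx : ‖x‖ ≤ 2 * b.rOut) :
    ∫⁻ y, ENNReal.ofReal (‖x + y‖ ^ (-γ₀)) ∂bumpMeasure b ≤
      ENNReal.ofReal (K ^ finrank ℝ E / volume.real (ball (0 : E) 1) * 3 ^ (finrank ℝ E + -γ₀) *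
        (∫ z in ball (0 : E) 1, ‖z‖ ^ (-γ₀)) * (2 ^ γ₀ * ‖x‖ ^ (-γ₀))) := by
  have hε : 0 < b.rOut := b.rOut_pos
  have hK : 0 ≤ K := (pos_of_mul_pos_left (hε.trans_le hb) b.rIn_pos.le).le
  have hε_pow : b.rOut ^ (-γ₀) ≤ 2 ^ γ₀ * ‖x‖ ^ (-γ₀) := by
    rw [← half_norm_rpow_neg]
    exact Real.rpow_le_rpow_of_nonpos (by positivity) (by linarith) (by linarith [hγ₀.1])
  have hball : ‖x‖ + b.rOut ≤ 3 * b.rOut := by linarith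
  refine (lintegral_bumpMeasure_add_le hb (fun z => ENNReal.ofReal (‖z‖ ^ (-γ₀))) hball).trans ?_
  rw [← ofReal_integral_eq_lintegral_ofReal
      (integrableOn_ball_norm_rpow (by linarith [hγ₀.2]) (3 * b.rOut))
      (.of_forall fun z => Real.rpow_nonneg (norm_nonneg z) _),
    ← ENNReal.ofReal_mul (by positivity), setIntegral_ball_norm_rpow _ (by positivity),
    Measure.addHaar_real_closedBall volume 0 hε.le]
  refine ENNReal.ofReal_le_ofReal ?_
  calc _ = K ^ finrank ℝ E / volume.real (ball (0 : E) 1) * 3 ^ (finrank ℝ E + -γ₀) *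
        (∫ z in ball (0 : E) 1, ‖z‖ ^ (-γ₀)) * b.rOut ^ (-γ₀) := by
        rw [Real.mul_rpow zero_le_three hε.le, Real.rpow_add hε, Real.rpow_natCast]
        field_simp
    _ ≤ _ := by gcongr

theorem exists_bumpA1_norm_rpow (hγ₀ : γ₀ ∈ Ico (0 : ℝ) (finrank ℝ E)) (K : ℝ) :
    ∃ D : ℝ≥0∞, D ≠ ⊤ ∧ ∀ b : ContDiffBump (0 : E), b.rOut ≤ K * b.rIn →
      BumpA1 b (fun x => ENNReal.ofReal (‖x‖ ^ (-γ₀))) D := by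
  have : Nontrivial E :=
    Module.nontrivial_of_finrank_pos (R := ℝ) (by exact_mod_cast hγ₀.1.trans_lt hγ₀.2)
  set M : ℝ := K ^ finrank ℝ E / volume.real (ball (0 : E) 1) * 3 ^ (finrank ℝ E + -γ₀) *
    ∫ z in ball (0 : E) 1, ‖z‖ ^ (-γ₀)
  refine ⟨ENNReal.ofReal (max 1 M * 2 ^ γ₀), ENNReal.ofReal_ne_top, fun b hb => ?_⟩
  filter_upwards [Measure.ae_ne volume (0 : E)] with x hx
  have hbound : ∫⁻ y, ENNReal.ofReal (‖x + y‖ ^ (-γ₀)) ∂bumpMeasure b ≤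
      ENNReal.ofReal (max 1 M * (2 ^ γ₀ * ‖x‖ ^ (-γ₀))) := by
    rcases le_total (2 * b.rOut) ‖x‖ with hfar | hnear
    · refine (lintegral_bumpMeasure_norm_rpow_le_of_two_mul_rOut_le hγ₀.1 hfar).trans
        (ENNReal.ofReal_le_ofReal ?_)
      exact le_mul_of_one_le_left (by positivity) (le_max_left _ _)
    · refine (lintegral_bumpMeasure_norm_rpow_le_of_norm_le hγ₀ hb hx hnear).trans
        (ENNReal.ofReal_le_ofReal ?_)
      gcongr
      exact le_max_right _ _
  rwa [← ENNReal.ofReal_mul (by positivity), mul_assoc]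

theorem exists_bumpA1_twoPower (hγ₀ : γ₀ ∈ Ico (0 : ℝ) (finrank ℝ E)) (γ K : ℝ) :
    ∃ D : ℝ≥0∞, D ≠ ⊤ ∧ ∀ b : ContDiffBump (0 : E), b.rOut ≤ 1 → b.rOut ≤ K * b.rIn →
      BumpA1 b (fun x => ENNReal.ofReal (twoPower γ₀ γ x)) D := by
  obtain ⟨D, hD, hA1⟩ := exists_bumpA1_norm_rpow hγ₀ K
  refine ⟨D * ENNReal.ofReal (2 ^ |γ₀ - γ|), ENNReal.mul_ne_top hD ENNReal.ofReal_ne_top,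
    fun b hb hbK => ?_⟩
  have hslow (x y : E) (hy : ‖y‖ ≤ b.rOut) : ENNReal.ofReal (max 1 ‖x + y‖ ^ (γ₀ - γ)) ≤
      ENNReal.ofReal (2 ^ |γ₀ - γ|) * ENNReal.ofReal (max 1 ‖x‖ ^ (γ₀ - γ)) := by
    rw [← ENNReal.ofReal_mul (by positivity)]
    exact ENNReal.ofReal_le_ofReal (max_one_norm_add_rpow_le (hy.trans hb) _)
  have hmul := (hA1 b hbK).mul hslow ENNReal.ofReal_ne_top fun _ => ENNReal.ofReal_ne_top
  simpa only [twoPower, Pi.mul_def, ENNReal.ofReal_mul (Real.rpow_nonneg (norm_nonneg _) _)]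
    using hmul

theorem integrableOn_ball_twoPower (hγ₀ : γ₀ < finrank ℝ E) (γ r : ℝ) :
    IntegrableOn (fun x : E => twoPower γ₀ γ x) (ball 0 r) := by
  have hcont : Continuous fun x : E => max 1 ‖x‖ ^ (γ₀ - γ) :=
    (continuous_const.max continuous_norm).rpow_const fun x =>
      .inl (one_pos.trans_le (le_max_left _ _)).ne'
  refine (integrableOn_ball_norm_rpow (by linarith) r).mul_continuousOn_of_subset
    hcont.continuousOn measurableSet_ball (isCompact_closedBall 0 r) ball_subset_closedBall

end PowerWeights

/-! ### Convergence by density -/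

section Density

variable {ι X : Type*} [MeasurableSpace X] {μ : Measure X} {l : Filter ι}

theorem tendsto_integral_mul_of_tendsto_eLpNorm {p q : ℝ≥0∞} [q.HolderTriple p 1]
    {w f : X → ℝ} {u : ι → X → ℝ} (hw : MemLp w q μ) (hf : MemLp f p μ)
    (hu : ∀ i, AEStronglyMeasurable (u i) μ)
    (hlim : Tendsto (fun i => eLpNorm (u i - f) p μ) l (𝓝 0)) :
    Tendsto (fun i => ∫ x, w x * u i x ∂μ) l (𝓝 (∫ x, w x * f x ∂μ)) := by
  have hdiff (i : ι) : w * u i - w * f = w • (u i - f) := (mul_sub w (u i) f).symm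
  have hbound : Tendsto (fun i => eLpNorm w q μ * eLpNorm (u i - f) p μ) l (𝓝 0) := by
    simpa only [mul_zero] using ENNReal.Tendsto.const_mul hlim (.inr hw.eLpNorm_ne_top)
  refine tendsto_integral_of_L1' (w * f) (hw.integrable_mul hf).aestronglyMeasurable
    (F := fun i => w * u i) ?_ ?_
  · filter_upwards [hlim.eventually (gt_mem_nhds ENNReal.zero_lt_top)] with i hi
    have hi' : MemLp (u i - f) p μ := ⟨(hu i).sub hf.aestronglyMeasurable, hi⟩
    simpa only [sub_add_cancel] using hw.integrable_mul (hi'.add hf)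
  · refine tendsto_of_tendsto_of_tendsto_of_le_of_le tendsto_const_nhds hbound
      (fun _ => zero_le) fun i => ?_
    simp only [hdiff]
    exact eLpNorm_smul_le_mul_eLpNorm ((hu i).sub hf.aestronglyMeasurable) hw.aestronglyMeasurable

theorem eLpNorm_cutoff_mul_sub_le {p : ℝ≥0∞} (hp : 1 ≤ p) {χ f g : X → ℝ}
    (hχ : AEStronglyMeasurable χ μ) (hχ1 : ∀ x, |χ x| ≤ 1) (hg : AEStronglyMeasurable g μ)
    (hf : AEStronglyMeasurable f μ) :
    eLpNorm (χ * g - f) p μ ≤ eLpNorm (g - f) p μ + eLpNorm (χ * f - f) p μ := by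
  have hsplit : χ * g - f = χ * (g - f) + (χ * f - f) := by ring
  rw [hsplit]
  refine (eLpNorm_add_le (hχ.mul (hg.sub hf)) ((hχ.mul hf).sub hf) hp).trans ?_
  gcongr
  refine eLpNorm_mono fun x => ?_
  rw [Pi.mul_apply, norm_mul]
  exact mul_le_of_le_one_left (norm_nonneg _) (hχ1 x)

variable [TopologicalSpace X] [NormalSpace X] [R1Space X] [WeaklyLocallyCompactSpace X]
  [BorelSpace X] [μ.Regular]

theorem tendsto_zero_of_forall_hasCompactSupport {F : Type*} [NormedAddCommGroup F]
    [NormedSpace ℝ F] {p : ℝ≥0∞} (hp : p ≠ ⊤) {f : X → F} (hf : MemLp f p μ)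
    {N : ι → (X → F) → ℝ≥0∞} {K : ℝ≥0∞} (hK : K ≠ ⊤)
    (hsub : ∀ i g, Continuous g → HasCompactSupport g → N i f ≤ N i g + K * eLpNorm (f - g) p μ)
    (hN : ∀ g, Continuous g → HasCompactSupport g → Tendsto (fun i => N i g) l (𝓝 0)) :
    Tendsto (fun i => N i f) l (𝓝 0) := by
  refine ENNReal.tendsto_nhds_zero.2 fun ε hε => ?_
  have hε2 : 0 < ε / 2 := ENNReal.half_pos hε.ne'
  obtain ⟨δ, hδ, hδK⟩ := ENNReal.exists_nnreal_pos_mul_lt hK hε2.ne'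
  obtain ⟨g, hgc, hfg, hg, -⟩ :=
    hf.exists_hasCompactSupport_eLpNorm_sub_le hp (ENNReal.coe_ne_zero.2 hδ.ne')
  filter_upwards [ENNReal.tendsto_nhds_zero.1 (hN g hg hgc) _ hε2] with i hi
  calc N i f ≤ N i g + K * eLpNorm (f - g) p μ := hsub i g hg hgc
    _ ≤ ε / 2 + K * δ := by gcongr
    _ ≤ ε / 2 + ε / 2 := by rw [mul_comm]; gcongr
    _ = ε := ENNReal.add_halves ε

theorem tendsto_eLpNorm_cutoff_mul_sub {p : ℝ≥0∞} {f : X → ℝ} {χ : ι → X → ℝ} (hp : 1 ≤ p)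
    (hp' : p ≠ ⊤) (hf : MemLp f p μ) (hχ : ∀ i, Continuous (χ i)) (hχ1 : ∀ i x, |χ i x| ≤ 1)
    (hχlim : ∀ S : Set X, IsCompact S → ∀ᶠ i in l, ∀ x ∈ S, χ i x = 1) :
    Tendsto (fun i => eLpNorm (χ i * f - f) p μ) l (𝓝 0) := by
  refine tendsto_zero_of_forall_hasCompactSupport (N := fun i f => eLpNorm (χ i * f - f) p μ)
    (K := ENNReal.ofReal 2) hp' hf ENNReal.ofReal_ne_top (fun i g hg _ => ?_) fun g _ hgc => ?_
  · have hsplit : χ i * f - f = (χ i * g - g) + (χ i - 1) * (f - g) := by ring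
    have hfg := hf.aestronglyMeasurable.sub hg.aestronglyMeasurable
    have hχ1m : AEStronglyMeasurable (χ i - 1) μ :=
      ((hχ i).sub continuous_one).aestronglyMeasurable
    rw [hsplit]
    refine (eLpNorm_add_le (((hχ i).mul hg).sub hg).aestronglyMeasurable (hχ1m.mul hfg) hp).trans ?_
    gcongr
    refine eLpNorm_le_mul_eLpNorm_of_ae_le_mul (.of_forall fun x => ?_) p
    rw [Pi.mul_apply, norm_mul]
    gcongr
    have hbd := abs_le.1 (hχ1 i x)
    exact abs_le.2 ⟨by dsimp; linarith, by dsimp; linarith⟩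
  · refine tendsto_const_nhds.congr' ?_
    filter_upwards [hχlim (tsupport g) hgc.isCompact] with i hi
    have hzero : χ i * g - g = 0 := by
      ext x
      by_cases hx : x ∈ tsupport g
      · simp only [Pi.sub_apply, Pi.mul_apply, hi x hx, one_mul, sub_self, Pi.zero_apply]
      · simp only [Pi.sub_apply, Pi.mul_apply, image_eq_zero_of_notMem_tsupport hx, mul_zero,
          sub_self, Pi.zero_apply]
    rw [hzero, eLpNorm_zero]

end Density

section WeightedConvergence

variable {ι E : Type*} [NormedAddCommGroup E] [NormedSpace ℝ E] [FiniteDimensional ℝ E]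
  [MeasureSpace E] [BorelSpace E] {l : Filter ι} {p : ℝ≥0∞} {f : E → ℝ}
  {b : ι → ContDiffBump (0 : E)} [(volume : Measure E).IsAddHaarMeasure]

theorem bumpConv_sub (b : ContDiffBump (0 : E)) {g : E → ℝ} (hf : LocallyIntegrable f)
    (hg : LocallyIntegrable g) : bumpConv b (f - g) = bumpConv b f - bumpConv b g := by
  ext x
  simp only [Pi.sub_apply, bumpConv_apply, mul_sub]
  exact integral_sub (convolutionExistsAt_normed b hf x) (convolutionExistsAt_normed b hg x)

theorem support_bumpConv_subset_cthickening (b : ContDiffBump (0 : E)) (f : E → ℝ) :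
    Function.support (bumpConv b f) ⊆ cthickening b.rOut (tsupport f) := by
  intro x hx
  by_contra hx'
  have hzero : ∀ y ∈ ball x b.rOut, f y = 0 := fun y hy => by
    refine image_eq_zero_of_notMem_tsupport fun hy' => hx' ?_
    exact mem_cthickening_of_dist_le x y _ _ hy' (mem_ball'.1 hy).le
  have hfx := hzero x (mem_ball_self b.rOut_pos)
  exact hx ((b.normed_convolution_eq_right fun y hy => (hzero y hy).trans hfx.symm).trans hfx)

theorem eventually_dist_bumpConv_le (hr : Tendsto (fun i => (b i).rOut) l (𝓝 0))
    (hf : Continuous f) (hfc : HasCompactSupport f) {ε : ℝ} (hε : 0 < ε) :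
    ∀ᶠ i in l, ∀ x, dist (bumpConv (b i) f x) (f x) ≤ ε := by
  obtain ⟨δ, hδ, hfδ⟩ :=
    Metric.uniformContinuous_iff.1 (hfc.uniformContinuous_of_continuous hf) ε hε
  filter_upwards [hr.eventually (gt_mem_nhds hδ)] with i hi x
  exact (b i).dist_normed_convolution_le hf.aestronglyMeasurable fun y hy =>
    (hfδ ((mem_ball.1 hy).trans hi)).le

theorem tendsto_eLpNorm_bumpConv_sub_of_hasCompactSupport (μ : Measure E)
    [IsLocallyFiniteMeasure μ] (hp' : p ≠ ⊤) (hr : Tendsto (fun i => (b i).rOut) l (𝓝 0))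
    (hf : Continuous f) (hfc : HasCompactSupport f) :
    Tendsto (fun i => eLpNorm (bumpConv (b i) f - f) p μ) l (𝓝 0) := by
  set S : Set E := cthickening 1 (tsupport f)
  have hSc : IsCompact S := hfc.isCompact.cthickening
  have hSμ : μ S ^ (1 / p.toReal) ≠ ⊤ :=
    ENNReal.rpow_ne_top_of_nonneg (by positivity) hSc.measure_lt_top.ne
  refine ENNReal.tendsto_nhds_zero.2 fun ε hε => ?_
  obtain ⟨δ, hδ, hδε⟩ := ENNReal.exists_nnreal_pos_mul_lt hSμ hε.ne'
  filter_upwards [eventually_dist_bumpConv_le hr hf hfc (NNReal.coe_pos.2 hδ),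
    hr.eventually (ge_mem_nhds one_pos)] with i hdist hi
  refine (eLpNorm_sub_le_of_dist_bdd (s := S) μ hp' isClosed_cthickening.measurableSet
    (NNReal.coe_nonneg δ) hdist ?_ ?_).trans ?_
  · exact (support_bumpConv_subset_cthickening _ _).trans (cthickening_mono hi _)
  · exact (subset_tsupport f).trans (self_subset_cthickening _)
  · rw [ENNReal.ofReal_coe_nnreal]
    exact hδε.le

variable {m : E → ℝ≥0∞} [IsLocallyFiniteMeasure (volume.withDensity m)] {D : ℝ≥0∞}

theorem tendsto_eLpNorm_bumpConv_sub (hr : Tendsto (fun i => (b i).rOut) l (𝓝 0))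
    (hm : Measurable m) (hD : D ≠ ⊤) (hA1 : ∀ i, BumpA1 (b i) m D) (hp : 1 ≤ p) (hp' : p ≠ ⊤)
    (hf : LocallyIntegrable f) (hfp : MemLp f p (volume.withDensity m)) :
    Tendsto (fun i => eLpNorm (bumpConv (b i) f - f) p (volume.withDensity m)) l (𝓝 0) := by
  have hD' : D ^ (1 / p.toReal) + 1 ≠ ⊤ :=
    ENNReal.add_ne_top.2 ⟨ENNReal.rpow_ne_top_of_nonneg (by positivity) hD, ENNReal.one_ne_top⟩
  refine tendsto_zero_of_forall_hasCompactSupport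
    (N := fun i f => eLpNorm (bumpConv (b i) f - f) p (volume.withDensity m)) hp' hfp hD'
    (fun i g hg _ => ?_)
    fun g hg hgc => tendsto_eLpNorm_bumpConv_sub_of_hasCompactSupport _ hp' hr hg hgc
  have hfg : LocallyIntegrable (f - g) := hf.sub hg.locallyIntegrable
  have hsplit : bumpConv (b i) f - f =
      (bumpConv (b i) g - g) + (bumpConv (b i) (f - g) - (f - g)) := by
    rw [bumpConv_sub _ hf hg.locallyIntegrable]; abel
  have hfgm := hfp.aestronglyMeasurable.sub (hg.aestronglyMeasurable (μ := volume.withDensity m))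
  have hconv := (continuous_bumpConv (b i) hfg).aestronglyMeasurable (μ := volume.withDensity m)
  rw [hsplit, add_mul, one_mul]
  refine (eLpNorm_add_le ((continuous_bumpConv _ hg.locallyIntegrable).sub hg).aestronglyMeasurable
    (hconv.sub hfgm) hp).trans ?_
  gcongr
  refine (eLpNorm_sub_le hconv hfgm hp).trans ?_
  gcongr
  exact (hA1 i).eLpNorm_bumpConv_le hm hp hp' hfg

theorem tendsto_eLpNorm_bumpConv_cutoff_mul_bumpConv_sub
    (hr : Tendsto (fun i => (b i).rOut) l (𝓝 0)) (hm : Measurable m) (hD : D ≠ ⊤)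
    (hA1 : ∀ i, BumpA1 (b i) m D) (hp : 1 ≤ p) (hp' : p ≠ ⊤) (hf : LocallyIntegrable f)
    (hfp : MemLp f p (volume.withDensity m)) {χ : ι → E → ℝ} (hχ : ∀ i, Continuous (χ i))
    (hχ1 : ∀ i x, |χ i x| ≤ 1)
    (hχlim : ∀ S : Set E, IsCompact S → ∀ᶠ i in l, ∀ x ∈ S, χ i x = 1) :
    Tendsto (fun i => eLpNorm (bumpConv (b i) (χ i * bumpConv (b i) f) - f) p
      (volume.withDensity m)) l (𝓝 0) := by
  set μ := volume.withDensity m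
  set M := D ^ (1 / p.toReal)
  have hM : M ≠ ⊤ := ENNReal.rpow_ne_top_of_nonneg (by positivity) hD
  have hconv := tendsto_eLpNorm_bumpConv_sub hr hm hD hA1 hp hp' hf hfp
  have hcut := tendsto_eLpNorm_cutoff_mul_sub hp hp' hfp hχ hχ1 hχlim
  have hlim : Tendsto (fun i => M * (eLpNorm (bumpConv (b i) f - f) p μ +
      eLpNorm (χ i * f - f) p μ) + eLpNorm (bumpConv (b i) f - f) p μ) l (𝓝 0) := by
    simpa only [add_zero, mul_zero] using
      (ENNReal.Tendsto.const_mul (hconv.add hcut) (.inr hM)).add hconv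
  refine tendsto_of_tendsto_of_tendsto_of_le_of_le tendsto_const_nhds hlim (fun _ => zero_le)
    fun i => ?_
  have hu : Continuous (bumpConv (b i) f) := continuous_bumpConv _ hf
  have hχu : LocallyIntegrable (χ i * bumpConv (b i) f) := ((hχ i).mul hu).locallyIntegrable
  have hχ_diff : eLpNorm (χ i * bumpConv (b i) f - f) p μ ≤
      eLpNorm (bumpConv (b i) f - f) p μ + eLpNorm (χ i * f - f) p μ :=
    eLpNorm_cutoff_mul_sub_le hp (hχ i).aestronglyMeasurable (hχ1 i) hu.aestronglyMeasurable
      hfp.aestronglyMeasurable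
  have hsplit : bumpConv (b i) (χ i * bumpConv (b i) f) - f =
      bumpConv (b i) (χ i * bumpConv (b i) f - f) + (bumpConv (b i) f - f) := by
    rw [bumpConv_sub _ hχu hf]; abel
  rw [hsplit]
  refine (eLpNorm_add_le (continuous_bumpConv _ (hχu.sub hf)).aestronglyMeasurable
    (hu.aestronglyMeasurable.sub hfp.aestronglyMeasurable) hp).trans ?_
  gcongr
  exact ((hA1 i).eLpNorm_bumpConv_le hm hp hp' (hχu.sub hf)).trans (by gcongr)

end WeightedConvergence

/-! ### The commutator error -/

section WeightedHolder

variable {X : Type*} [MeasurableSpace X] {μ : Measure X} {p q r : ℝ≥0∞} {f g w ρ : X → ℝ}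

theorem eLpNorm_withDensity_ofReal (hw : Measurable w) (hw0 : ∀ x, 0 ≤ w x) (hq : q ≠ 0)
    (hq' : q ≠ ⊤) (f : X → ℝ) : eLpNorm f q (μ.withDensity fun x => ENNReal.ofReal (w x)) =
      eLpNorm (fun x => w x ^ q.toReal⁻¹ * f x) q μ := by
  rw [eLpNorm_eq_lintegral_rpow_enorm_toReal hq hq', eLpNorm_eq_lintegral_rpow_enorm_toReal hq hq',
    lintegral_withDensity_eq_lintegral_mul_non_measurable _ hw.ennreal_ofReal
      (.of_forall fun _ => ENNReal.ofReal_lt_top)]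
  congr 1
  refine lintegral_congr fun x => ?_
  rw [Pi.mul_apply, enorm_mul, ENNReal.mul_rpow_of_nonneg _ _ ENNReal.toReal_nonneg,
    Real.enorm_of_nonneg (Real.rpow_nonneg (hw0 x) _),
    ENNReal.ofReal_rpow_of_nonneg (Real.rpow_nonneg (hw0 x) _) ENNReal.toReal_nonneg,
    Real.rpow_inv_rpow (hw0 x) (ENNReal.toReal_ne_zero.2 ⟨hq, hq'⟩)]

theorem eLpNorm_withDensity_le_mul [r.HolderTriple p q] (hw : Measurable w) (hw0 : ∀ x, 0 ≤ w x)
    (hρ : Measurable ρ) (hρ0 : ∀ x, 0 ≤ ρ x) (hq : q ≠ 0) (hq' : q ≠ ⊤) (hp : p ≠ 0) (hp' : p ≠ ⊤)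
    (hg : AEStronglyMeasurable g μ) (hf : AEStronglyMeasurable f μ)
    (h : ∀ᵐ x ∂μ, w x ^ q.toReal⁻¹ ≤ g x * ρ x ^ p.toReal⁻¹) :
    eLpNorm f q (μ.withDensity fun x => ENNReal.ofReal (w x)) ≤
      eLpNorm g r μ * eLpNorm f p (μ.withDensity fun x => ENNReal.ofReal (ρ x)) := by
  have hρf : AEStronglyMeasurable (fun x => ρ x ^ p.toReal⁻¹ * f x) μ :=
    (hρ.pow_const _).aestronglyMeasurable.mul hf
  rw [eLpNorm_withDensity_ofReal hw hw0 hq hq', eLpNorm_withDensity_ofReal hρ hρ0 hp hp']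
  refine (eLpNorm_mono_ae ?_).trans (eLpNorm_smul_le_mul_eLpNorm hρf hg)
  filter_upwards [h] with x hx
  rw [Pi.smul_apply', smul_eq_mul, ← mul_assoc, norm_mul, norm_mul]
  gcongr
  rw [Real.norm_of_nonneg (Real.rpow_nonneg (hw0 x) _)]
  exact hx.trans (le_abs_self _)

theorem integrable_sq_mul_of_memLp_withDensity (hw : Measurable w) (hw0 : ∀ x, 0 ≤ w x)
    (hf : MemLp f 2 (μ.withDensity fun x => ENNReal.ofReal (w x))) :
    Integrable (fun x => f x ^ 2 * w x) μ := by
  have hint := (integrable_withDensity_iff_integrable_smul' hw.ennreal_ofReal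
    (.of_forall fun _ => ENNReal.ofReal_lt_top)).1 hf.integrable_sq
  simpa only [ENNReal.toReal_ofReal (hw0 _), smul_eq_mul, mul_comm] using hint

theorem integral_sq_mul_eq_toReal_eLpNorm_sq (hw : Measurable w) (hw0 : ∀ x, 0 ≤ w x)
    (hf : MemLp f 2 (μ.withDensity fun x => ENNReal.ofReal (w x))) :
    ∫ x, f x ^ 2 * w x ∂μ =
      (eLpNorm f 2 (μ.withDensity fun x => ENNReal.ofReal (w x))).toReal ^ 2 := by
  rw [hf.eLpNorm_eq_integral_rpow_norm two_ne_zero ENNReal.ofNat_ne_top,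
    ENNReal.toReal_ofReal (by positivity), ← Real.rpow_mul_natCast (by positivity),
    integral_withDensity_eq_integral_toReal_smul hw.ennreal_ofReal
      (.of_forall fun _ => ENNReal.ofReal_lt_top)]
  simp only [ENNReal.toReal_ofNat, Nat.cast_ofNat, inv_mul_cancel₀ (two_ne_zero' ℝ), Real.rpow_one,
    Real.rpow_two, Real.norm_eq_abs, sq_abs, ENNReal.toReal_ofReal (hw0 _), smul_eq_mul, mul_comm]

theorem exists_holderTriple_two (hp : 2 ≤ p) :
    ∃ r : ℝ≥0∞, r ≠ 0 ∧ r.HolderTriple p 2 ∧ r.toReal⁻¹ = 2⁻¹ - p.toReal⁻¹ := by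
  have hle : p⁻¹ ≤ 2⁻¹ := ENNReal.inv_le_inv.2 hp
  have htop : (2⁻¹ : ℝ≥0∞) ≠ ⊤ := ENNReal.inv_ne_top.2 two_ne_zero
  refine ⟨(2⁻¹ - p⁻¹)⁻¹, ENNReal.inv_ne_zero.2 (ENNReal.sub_ne_top htop),
    ⟨by rw [inv_inv, tsub_add_cancel_of_le hle]⟩, ?_⟩
  rw [← ENNReal.toReal_inv, inv_inv, ENNReal.toReal_sub_of_le hle htop, ENNReal.toReal_inv,
    ENNReal.toReal_inv, ENNReal.toReal_ofNat]

end WeightedHolder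

section Decay

variable {E : Type*} [NormedAddCommGroup E] [NormedSpace ℝ E] {a R : ℝ}

theorem decayWeight_nonneg (hR : 0 ≤ R) (x : E) : 0 ≤ decayWeight a R x := by
  unfold decayWeight; positivity

theorem decayWeight_add_le {x y : E} (hy : ‖y‖ ≤ R) (hR : 0 < R) :
    decayWeight a R (x + y) ≤ 2 ^ |a| * decayWeight a R x := by
  have hadd := norm_add_le x y
  have hsub : ‖x‖ ≤ ‖x + y‖ + ‖y‖ := norm_le_add_norm_add x y
  have hquot := rpow_le_two_rpow_abs_mul_rpow (t := R + ‖x + y‖) (u := R + ‖x‖) (by positivity)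
    (by positivity) (by linarith [norm_nonneg x]) (by linarith [norm_nonneg (x + y)]) (-a)
  rw [abs_neg] at hquot
  rw [decayWeight, decayWeight, mul_left_comm]
  gcongr

theorem decayWeight_le_rpow (ha : 0 ≤ a) (hR : 0 < R) (x : E) :
    decayWeight a R x ≤ R ^ (finrank ℝ E - a) := by
  rw [decayWeight, sub_eq_add_neg, Real.rpow_add hR, Real.rpow_natCast]
  exact mul_le_mul_of_nonneg_left
    (Real.rpow_le_rpow_of_nonpos hR (by linarith [norm_nonneg x]) (by linarith)) (by positivity)

theorem sqrt_decayWeight_le {c γ P t : ℝ} {ρ : E → ℝ} {x : E} (hc : 0 < c) (hP : 0 < P)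
    (hγ : 0 ≤ γ) (hR : 1 ≤ R) (hat : t + γ / P ≤ a / 2) (hρ : c * max 1 ‖x‖ ^ (-γ) ≤ ρ x) :
    decayWeight a R x ^ (2 : ℝ)⁻¹ ≤
      c ^ (-P⁻¹) * (R ^ (finrank ℝ E / 2 : ℝ) * (R + ‖x‖) ^ (-t)) * ρ x ^ P⁻¹ := by
  have hR0 : 0 < R := by linarith
  have hpos : 1 ≤ R + ‖x‖ := by linarith [norm_nonneg x]
  have hmax : max 1 ‖x‖ ≤ R + ‖x‖ := max_le hpos (by linarith)
  have hmax0 : 0 < max 1 ‖x‖ := one_pos.trans_le (le_max_left _ _)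
  have hρ_low : c ^ P⁻¹ * (R + ‖x‖) ^ (-(γ / P)) ≤ ρ x ^ P⁻¹ := by
    calc c ^ P⁻¹ * (R + ‖x‖) ^ (-(γ / P)) ≤ c ^ P⁻¹ * max 1 ‖x‖ ^ (-(γ / P)) :=
          mul_le_mul_of_nonneg_left
            (Real.rpow_le_rpow_of_nonpos hmax0 hmax (neg_nonpos.2 (by positivity))) (by positivity)
      _ = (c * max 1 ‖x‖ ^ (-γ)) ^ P⁻¹ := by
          rw [Real.mul_rpow hc.le (by positivity), ← Real.rpow_mul hmax0.le]
          congr 2; ring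
      _ ≤ ρ x ^ P⁻¹ := by gcongr
  calc decayWeight a R x ^ (2 : ℝ)⁻¹ = R ^ (finrank ℝ E / 2 : ℝ) * (R + ‖x‖) ^ (-(a / 2)) := by
        rw [decayWeight, Real.mul_rpow (by positivity) (by positivity), ← Real.rpow_natCast,
          ← Real.rpow_mul hR0.le, ← Real.rpow_mul (by linarith)]
        congr 2; ring
    _ ≤ R ^ (finrank ℝ E / 2 : ℝ) * ((R + ‖x‖) ^ (-t) * (R + ‖x‖) ^ (-(γ / P))) := by
        rw [← Real.rpow_add (by linarith)]
        exact mul_le_mul_of_nonneg_left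
          (Real.rpow_le_rpow_of_exponent_le hpos (by linarith)) (by positivity)
    _ = c ^ (-P⁻¹) * (R ^ (finrank ℝ E / 2 : ℝ) * (R + ‖x‖) ^ (-t)) *
          (c ^ P⁻¹ * (R + ‖x‖) ^ (-(γ / P))) := by
        rw [Real.rpow_neg hc.le]
        field_simp
    _ ≤ _ := by gcongr

variable [MeasureSpace E]

theorem measurable_decayWeight [BorelSpace E] (a R : ℝ) : Measurable (decayWeight a R : E → ℝ) := by
  unfold decayWeight; fun_prop

/-- The measure with density `decayWeight a R`, which controls the commutator error produced by a
cutoff at scale `R`. -/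
noncomputable def decayMeasure (E : Type*) [NormedAddCommGroup E] [NormedSpace ℝ E]
    [MeasureSpace E] (a R : ℝ) : Measure E :=
  volume.withDensity fun x => ENNReal.ofReal (decayWeight a R x)

variable [FiniteDimensional ℝ E] [BorelSpace E] [(volume : Measure E).IsAddHaarMeasure]

theorem memLp_one_add_norm_rpow {r : ℝ≥0∞} (hr : r ≠ 0) {t : ℝ} (ht : 0 < t) :
    MemLp (fun x : E => (1 + ‖x‖) ^ (-(t + finrank ℝ E * r.toReal⁻¹))) r := by
  have hmeas : AEStronglyMeasurable (fun x : E => (1 + ‖x‖) ^ (-(t + finrank ℝ E * r.toReal⁻¹))) :=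
    Measurable.aestronglyMeasurable (by fun_prop)
  have hone (x : E) : 1 ≤ 1 + ‖x‖ := by linarith [norm_nonneg x]
  by_cases hr' : r = ⊤
  · rw [hr'] at hmeas ⊢
    refine memLp_top_of_bound hmeas 1 (.of_forall fun x => ?_)
    rw [Real.norm_of_nonneg (by positivity)]
    exact Real.rpow_le_one_of_one_le_of_nonpos (hone x) (by simp only [neg_nonpos]; positivity)
  · have hr0 : 0 < r.toReal := ENNReal.toReal_pos hr hr'
    have hexp : -(t + finrank ℝ E * r.toReal⁻¹) * r.toReal = -(t * r.toReal + finrank ℝ E) := by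
      field_simp
    refine (integrable_norm_rpow_iff hmeas hr hr').1 ?_
    simp only [Real.norm_of_nonneg (Real.rpow_nonneg (zero_le_one.trans (hone _)) _),
      ← Real.rpow_mul (zero_le_one.trans (hone _)), hexp]
    exact integrable_one_add_norm (by linarith [mul_pos ht hr0])

theorem eLpNorm_comp_inv_smul (g : E → ℝ) (r : ℝ≥0∞) (hR : 0 < R) :
    eLpNorm (fun x => g (R⁻¹ • x)) r =
      ENNReal.ofReal (R ^ (finrank ℝ E * r.toReal⁻¹)) * eLpNorm g r := by
  have hemb : MeasurableEmbedding fun x : E => R⁻¹ • x :=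
    (Homeomorph.smulOfNeZero R⁻¹ (inv_pos.2 hR).ne').measurableEmbedding
  have hdet : ENNReal.ofReal |((R⁻¹) ^ finrank ℝ E)⁻¹| = ENNReal.ofReal (R ^ finrank ℝ E) := by
    rw [inv_pow, inv_inv, abs_of_pos (by positivity)]
  have hmeas := Measure.map_addHaar_smul (volume : Measure E) (inv_pos.2 hR).ne'
  rw [hdet] at hmeas
  have hmap := hemb.eLpNorm_map_measure (g := g) (p := r) (μ := volume)
  rw [hmeas, eLpNorm_smul_measure_of_ne_zero (ENNReal.ofReal_pos.2 (by positivity)).ne', one_div,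
    ENNReal.toReal_inv, ENNReal.ofReal_rpow_of_nonneg (by positivity) (by positivity), smul_eq_mul,
    ← Real.rpow_natCast_mul hR.le] at hmap
  exact hmap.symm

theorem eLpNorm_rpow_mul_add_norm_rpow (t : ℝ) (r : ℝ≥0∞) (hR : 0 < R) :
    eLpNorm (fun x : E => R ^ t * (R + ‖x‖) ^ (-(t + finrank ℝ E * r.toReal⁻¹))) r =
      eLpNorm (fun x : E => (1 + ‖x‖) ^ (-(t + finrank ℝ E * r.toReal⁻¹))) r := by
  set n : ℝ := finrank ℝ E * r.toReal⁻¹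
  have hscale : (fun x : E => R ^ t * (R + ‖x‖) ^ (-(t + n))) =
      R ^ (-n) • fun x : E => (1 + ‖R⁻¹ • x‖) ^ (-(t + n)) := by
    ext x
    have hfactor : R + ‖x‖ = R * (1 + ‖R⁻¹ • x‖) := by
      rw [norm_smul, Real.norm_of_nonneg (by positivity)]; field_simp
    rw [hfactor, Real.mul_rpow hR.le (by positivity), ← mul_assoc, ← Real.rpow_add hR,
      Pi.smul_apply, smul_eq_mul]
    congr 2; ring
  rw [hscale, eLpNorm_const_smul, eLpNorm_comp_inv_smul (fun x => (1 + ‖x‖) ^ (-(t + n))) r hR,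
    ← mul_assoc, Real.enorm_of_nonneg (by positivity), ← ENNReal.ofReal_mul (by positivity),
    ← Real.rpow_add hR, neg_add_cancel, Real.rpow_zero, ENNReal.ofReal_one, one_mul]

theorem exists_eLpNorm_decayMeasure_le [Nontrivial E] {p : ℝ≥0∞} (hp : 2 ≤ p) (hp' : p ≠ ⊤)
    {ρ : E → ℝ} (hρ : Measurable ρ) (hρ0 : ∀ x, 0 ≤ ρ x) {c γ : ℝ} (hc : 0 < c) (hγ : 0 ≤ γ)
    (hγ' : γ ≤ finrank ℝ E - p.toReal / 2 * (2 * finrank ℝ E - a))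
    (hlow : ∀ᵐ x, c * max 1 ‖x‖ ^ (-γ) ≤ ρ x) :
    ∃ K : ℝ≥0∞, K ≠ ⊤ ∧ ∀ R, 1 ≤ R → ∀ f : E → ℝ, AEStronglyMeasurable f →
      eLpNorm f 2 (decayMeasure E a R) ≤
        K * eLpNorm f p (volume.withDensity fun x => ENNReal.ofReal (ρ x)) := by
  have hp0 : p ≠ 0 := (two_pos.trans_le hp).ne'
  have hP : 0 < p.toReal := ENNReal.toReal_pos hp0 hp'
  obtain ⟨r, hr0, hr, hrinv⟩ := exists_holderTriple_two hp
  have ht0 : 0 < (finrank ℝ E / 2 : ℝ) := by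
    have : 0 < finrank ℝ E := Module.finrank_pos
    positivity
  have hexp : (finrank ℝ E / 2 : ℝ) + finrank ℝ E * r.toReal⁻¹ + γ / p.toReal ≤ a / 2 := by
    rw [hrinv]
    field_simp
    linarith
  refine ⟨_, ENNReal.mul_ne_top (enorm_ne_top (x := c ^ (-p.toReal⁻¹)))
    (memLp_one_add_norm_rpow (E := E) hr0 ht0).eLpNorm_ne_top, fun R hR f hf => ?_⟩
  rw [← eLpNorm_rpow_mul_add_norm_rpow (finrank ℝ E / 2) r (one_pos.trans_le hR),
    ← eLpNorm_const_smul]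
  refine eLpNorm_withDensity_le_mul (measurable_decayWeight a R)
    (decayWeight_nonneg (zero_le_one.trans hR)) hρ hρ0 two_ne_zero ENNReal.ofNat_ne_top hp0 hp'
    (Measurable.aestronglyMeasurable (by fun_prop)) hf ?_
  filter_upwards [hlow] with x hx
  exact sqrt_decayWeight_le hc hP hγ hR hexp hx

end Decay

section DecayLimit

variable {E : Type*} [NormedAddCommGroup E] [NormedSpace ℝ E] [MeasureSpace E] {a R : ℝ}
  {f : E → ℝ} {ι : Type*} {l : Filter ι} {S : ι → ℝ}

theorem decayMeasure_le_smul_volume (ha : 0 ≤ a) (hR : 0 < R) :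
    decayMeasure E a R ≤ ENNReal.ofReal (R ^ (finrank ℝ E - a)) • volume := by
  rw [decayMeasure, ← withDensity_const]
  exact withDensity_mono
    (.of_forall fun x => ENNReal.ofReal_le_ofReal (decayWeight_le_rpow ha hR x))

variable [BorelSpace E]

theorem tendsto_eLpNorm_decayMeasure_of_hasCompactSupport
    [IsFiniteMeasureOnCompacts (volume : Measure E)] (ha : finrank ℝ E < a)
    (hS : Tendsto S l atTop) (hf : Continuous f) (hfc : HasCompactSupport f) :
    Tendsto (fun i => eLpNorm f 2 (decayMeasure E a (S i))) l (𝓝 0) := by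
  have hf2 : MemLp f 2 := hf.memLp_of_hasCompactSupport hfc
  have hpow : Tendsto (fun i => ENNReal.ofReal (S i ^ (finrank ℝ E - a)) ^ (2⁻¹ : ℝ)) l (𝓝 0) := by
    have hneg := (tendsto_rpow_neg_atTop (sub_pos.2 ha)).comp hS
    simpa only [neg_sub, ENNReal.ofReal_zero, Function.comp_def,
      ENNReal.zero_rpow_of_pos (show (0 : ℝ) < 2⁻¹ by norm_num)]
      using (ENNReal.tendsto_ofReal hneg).ennrpow_const (2⁻¹ : ℝ)
  have hlim := ENNReal.Tendsto.mul_const (b := eLpNorm f 2 volume) hpow (.inr hf2.eLpNorm_ne_top)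
  rw [zero_mul] at hlim
  refine tendsto_of_tendsto_of_tendsto_of_le_of_le' tendsto_const_nhds hlim
    (.of_forall fun _ => zero_le) ?_
  filter_upwards [hS.eventually_gt_atTop 0] with i hi
  have ha0 : 0 ≤ a := (Nat.cast_nonneg _).trans ha.le
  have hpos : ENNReal.ofReal (S i ^ (finrank ℝ E - a)) ≠ 0 :=
    (ENNReal.ofReal_pos.2 (Real.rpow_pos_of_pos hi _)).ne'
  refine (eLpNorm_mono_measure f (decayMeasure_le_smul_volume ha0 hi)).trans_eq ?_
  rw [eLpNorm_smul_measure_of_ne_zero hpos, smul_eq_mul,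
    one_div, ENNReal.toReal_inv, ENNReal.toReal_ofNat]

variable [FiniteDimensional ℝ E]

theorem locallyIntegrable_of_integrable_mul_one_add_norm_rpow
    (hf : Integrable fun x => f x * (1 + ‖x‖) ^ (-a)) : LocallyIntegrable f := by
  have hpos (x : E) : 0 < 1 + ‖x‖ := by positivity
  have hcont : Continuous fun x : E => (1 + ‖x‖) ^ a :=
    (continuous_const.add continuous_norm).rpow_const fun x => .inl (hpos x).ne'
  have hprod : f = fun x => f x * (1 + ‖x‖) ^ (-a) * (1 + ‖x‖) ^ a := by
    ext x
    rw [mul_assoc, ← Real.rpow_add (hpos x), neg_add_cancel, Real.rpow_zero, mul_one]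
  rw [hprod]
  exact hf.locallyIntegrable.mul_continuous hcont

variable [(volume : Measure E).IsAddHaarMeasure]

theorem isFiniteMeasure_decayMeasure_one (ha : finrank ℝ E < a) :
    IsFiniteMeasure (decayMeasure E a 1) := by
  have hint : Integrable fun x : E => decayWeight a 1 x := by
    simpa only [decayWeight, one_pow, one_mul] using
      integrable_one_add_norm (E := E) (μ := volume) ha
  exact isFiniteMeasure_withDensity_ofReal hint.2

theorem integrable_mul_one_add_norm_rpow (ha : finrank ℝ E < a)
    (hf : MemLp f 2 (decayMeasure E a 1)) : Integrable fun x => f x * (1 + ‖x‖) ^ (-a) := by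
  have := isFiniteMeasure_decayMeasure_one (E := E) ha
  have hint := (integrable_withDensity_iff_integrable_smul'
    (measurable_decayWeight a 1).ennreal_ofReal (.of_forall fun _ => ENNReal.ofReal_lt_top)).1
    (hf.integrable one_le_two)
  simp only [ENNReal.toReal_ofReal (decayWeight_nonneg zero_le_one _)] at hint
  simpa only [decayWeight, one_pow, one_mul, smul_eq_mul, mul_comm] using hint

theorem locallyIntegrable_of_memLp_decayMeasure (ha : finrank ℝ E < a)
    (hf : MemLp f 2 (decayMeasure E a 1)) : LocallyIntegrable f :=
  locallyIntegrable_of_integrable_mul_one_add_norm_rpow (integrable_mul_one_add_norm_rpow ha hf)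

theorem bumpA1_decayWeight (hR : 0 < R) {b : ContDiffBump (0 : E)} (hb : b.rOut ≤ R) :
    BumpA1 b (fun x => ENNReal.ofReal (decayWeight a R x)) (ENNReal.ofReal (2 ^ |a|)) := by
  have hmul := (bumpA1_one b).mul (m' := fun x => ENNReal.ofReal (decayWeight a R x))
    (K := ENNReal.ofReal (2 ^ |a|)) (fun x y hy => ?_) ENNReal.ofReal_ne_top
    fun _ => ENNReal.ofReal_ne_top
  · rwa [one_mul, one_mul] at hmul
  · rw [← ENNReal.ofReal_mul (by positivity)]
    exact ENNReal.ofReal_le_ofReal (decayWeight_add_le (hy.trans hb) hR)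

theorem eLpNorm_bumpConv_decayMeasure_le (hR : 0 < R) {b : ContDiffBump (0 : E)}
    (hb : b.rOut ≤ R) (hf : LocallyIntegrable f) :
    eLpNorm (bumpConv b f) 2 (decayMeasure E a R) ≤
      ENNReal.ofReal (2 ^ |a|) ^ (2⁻¹ : ℝ) * eLpNorm f 2 (decayMeasure E a R) := by
  simpa only [decayMeasure, one_div, ENNReal.toReal_ofNat] using
    (bumpA1_decayWeight hR hb).eLpNorm_bumpConv_le (measurable_decayWeight a R).ennreal_ofReal
      one_le_two ENNReal.ofNat_ne_top hf

theorem tendsto_eLpNorm_decayMeasure {μ : Measure E} [μ.Regular] {p K : ℝ≥0∞} (hp : p ≠ ⊤)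
    (hK : K ≠ ⊤) (ha : finrank ℝ E < a) (hS : Tendsto S l atTop)
    (hle : ∀ i, ∀ g : E → ℝ, AEStronglyMeasurable g →
      eLpNorm g 2 (decayMeasure E a (S i)) ≤ K * eLpNorm g p μ)
    (hfm : AEStronglyMeasurable f) (hf : MemLp f p μ) :
    Tendsto (fun i => eLpNorm f 2 (decayMeasure E a (S i))) l (𝓝 0) := by
  refine tendsto_zero_of_forall_hasCompactSupport
    (N := fun i g => eLpNorm g 2 (decayMeasure E a (S i))) hp hf hK (fun i g hg _ => ?_)
    fun g hg hgc => tendsto_eLpNorm_decayMeasure_of_hasCompactSupport ha hS hg hgc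
  have hac : decayMeasure E a (S i) ≪ volume := withDensity_absolutelyContinuous _ _
  calc eLpNorm f 2 (decayMeasure E a (S i))
      = eLpNorm (g + (f - g)) 2 (decayMeasure E a (S i)) := by rw [add_sub_cancel]
    _ ≤ eLpNorm g 2 (decayMeasure E a (S i)) + eLpNorm (f - g) 2 (decayMeasure E a (S i)) :=
        eLpNorm_add_le hg.aestronglyMeasurable
          ((hfm.mono_ac hac).sub hg.aestronglyMeasurable) one_le_two
    _ ≤ _ := by gcongr; exact hle i _ (hfm.sub hg.aestronglyMeasurable)

theorem memLp_bumpConv_decayMeasure (hR : 0 < R) {b : ContDiffBump (0 : E)} (hb : b.rOut ≤ R)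
    (hf : LocallyIntegrable f) (hf2 : MemLp f 2 (decayMeasure E a R)) :
    MemLp (bumpConv b f) 2 (decayMeasure E a R) := by
  refine ⟨(continuous_bumpConv b hf).aestronglyMeasurable,
    (eLpNorm_bumpConv_decayMeasure_le hR hb hf).trans_lt (ENNReal.mul_lt_top ?_ hf2.2)⟩
  exact ENNReal.rpow_lt_top_of_nonneg (by norm_num) ENNReal.ofReal_ne_top

theorem tendsto_integral_sq_bumpConv_mul_decayWeight {b : ι → ContDiffBump (0 : E)}
    (hS : ∀ i, 0 < S i) (hb : ∀ i, (b i).rOut ≤ S i) (hf : LocallyIntegrable f)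
    (hf2 : ∀ i, MemLp f 2 (decayMeasure E a (S i)))
    (hlim : Tendsto (fun i => eLpNorm f 2 (decayMeasure E a (S i))) l (𝓝 0)) :
    Tendsto (fun i => ∫ x, bumpConv (b i) f x ^ 2 * decayWeight a (S i) x) l (𝓝 0) := by
  have hmem (i : ι) := memLp_bumpConv_decayMeasure (hS i) (hb i) hf (hf2 i)
  have hconst : ENNReal.ofReal (2 ^ |a|) ^ (2⁻¹ : ℝ) ≠ ⊤ :=
    ENNReal.rpow_ne_top_of_nonneg (by norm_num) ENNReal.ofReal_ne_top
  have hconv : Tendsto (fun i => eLpNorm (bumpConv (b i) f) 2 (decayMeasure E a (S i))) l (𝓝 0) :=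
    tendsto_of_tendsto_of_tendsto_of_le_of_le tendsto_const_nhds
      (by simpa only [mul_zero] using ENNReal.Tendsto.const_mul hlim (.inr hconst))
      (fun _ => zero_le) fun i => eLpNorm_bumpConv_decayMeasure_le (hS i) (hb i) hf
  have hsq := ((ENNReal.tendsto_toReal ENNReal.zero_ne_top).comp hconv).pow 2
  rw [ENNReal.toReal_zero, zero_pow two_ne_zero] at hsq
  exact hsq.congr fun i => (integral_sq_mul_eq_toReal_eLpNorm_sq (measurable_decayWeight a _)
    (decayWeight_nonneg (hS i).le) (hmem i)).symm

end DecayLimit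

/-! ### The energy inequality -/

section WeightedLebesgue

variable {X : Type*} [MeasurableSpace X] {μ : Measure X} {p : ℝ} {ρ : X → ℝ}

theorem memLp_withDensity_of_integrable_abs_rpow_mul (hρ : Measurable ρ) (hρ0 : ∀ x, 0 ≤ ρ x)
    (hp : 0 < p) {f : X → ℝ} (hf : AEStronglyMeasurable f μ)
    (hint : Integrable (fun x => |f x| ^ p * ρ x) μ) :
    MemLp f (ENNReal.ofReal p) (μ.withDensity fun x => ENNReal.ofReal (ρ x)) := by
  refine (integrable_norm_rpow_iff (hf.mono_ac (withDensity_absolutelyContinuous _ _))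
    (ENNReal.ofReal_pos.2 hp).ne' ENNReal.ofReal_ne_top).1 ?_
  refine (integrable_withDensity_iff_integrable_smul' hρ.ennreal_ofReal
    (.of_forall fun _ => ENNReal.ofReal_lt_top)).2 ?_
  simpa only [ENNReal.toReal_ofReal (hρ0 _), ENNReal.toReal_ofReal hp.le, smul_eq_mul,
    Real.norm_eq_abs, mul_comm] using hint

theorem integral_div_mul_withDensity (hρ : Measurable ρ) (hρ0 : ∀ x, 0 < ρ x) (g f : X → ℝ) :
    ∫ x, g x / ρ x * f x ∂μ.withDensity (fun x => ENNReal.ofReal (ρ x)) = ∫ x, g x * f x ∂μ := by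
  rw [integral_withDensity_eq_integral_toReal_smul hρ.ennreal_ofReal
    (.of_forall fun _ => ENNReal.ofReal_lt_top)]
  refine integral_congr_ae (.of_forall fun x => ?_)
  have hx := (hρ0 x).ne'
  simp only [ENNReal.toReal_ofReal (hρ0 x).le, smul_eq_mul]
  field_simp

theorem abs_div_rpow_mul_self {r : ℝ} (hr : 0 < r) (t : ℝ) :
    |t / r| ^ p * r = |t| ^ p * r ^ (-(p - 1)) := by
  rw [abs_div, abs_of_pos hr, Real.div_rpow (abs_nonneg t) hr.le, neg_sub, Real.rpow_sub hr,
    Real.rpow_one]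
  ring

theorem integrable_and_integral_le_of_lintegral_ofReal_le {f : X → ℝ}
    (hf : AEStronglyMeasurable f μ) (hf0 : ∀ x, 0 ≤ f x) {B : ℝ} (hB : 0 ≤ B)
    (h : ∫⁻ x, ENNReal.ofReal (f x) ∂μ ≤ ENNReal.ofReal B) :
    Integrable f μ ∧ ∫ x, f x ∂μ ≤ B := by
  refine ⟨(lintegral_ofReal_ne_top_iff_integrable hf (.of_forall hf0)).1
    (h.trans_lt ENNReal.ofReal_lt_top).ne, ?_⟩
  rw [integral_eq_lintegral_of_nonneg_ae (.of_forall hf0) hf]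
  exact ENNReal.toReal_le_of_le_ofReal hB h

end WeightedLebesgue

section TwoPowerWeight

variable {d : ℕ} {ρ : Ed d → ℝ} {c C γ₀ γ : ℝ}

theorem mul_max_one_norm_rpow_le_of_twoPowerWeight [NeZero d] (hw : TwoPowerWeight d ρ c C γ₀ γ)
    (hγ₀ : 0 ≤ γ₀) : ∀ᵐ x, c * max 1 ‖x‖ ^ (-γ) ≤ ρ x := by
  filter_upwards [twoPowerWeight_ae_bounds hw, Measure.ae_ne volume (0 : Ed d)] with x hx hx0
  exact (mul_le_mul_of_nonneg_left (max_one_norm_rpow_le_twoPower hγ₀ hx0) hw.1.le).trans hx.1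

theorem exists_bumpA1_of_twoPowerWeight (hw : TwoPowerWeight d ρ c C γ₀ γ)
    (hγ₀ : γ₀ ∈ Ico (0 : ℝ) d) (K : ℝ) :
    ∃ D : ℝ≥0∞, D ≠ ⊤ ∧ ∀ b : ContDiffBump (0 : Ed d), b.rOut ≤ 1 → b.rOut ≤ K * b.rIn →
      BumpA1 b (fun x => ENNReal.ofReal (ρ x)) D := by
  obtain ⟨D, hD, hA1⟩ := exists_bumpA1_twoPower (E := Ed d) (by simpa using hγ₀) γ K
  refine ⟨ENNReal.ofReal C * D * ENNReal.ofReal c⁻¹, ENNReal.mul_ne_top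
    (ENNReal.mul_ne_top ENNReal.ofReal_ne_top hD) ENNReal.ofReal_ne_top, fun b hb hbK => ?_⟩
  refine (hA1 b hb hbK).of_comparable ?_ ?_ ENNReal.ofReal_ne_top
  · filter_upwards [twoPowerWeight_ae_bounds hw] with x hx
    rw [← ENNReal.ofReal_mul (hw.1.trans hw.2.1).le]
    exact ENNReal.ofReal_le_ofReal hx.2
  · filter_upwards [twoPowerWeight_ae_bounds hw] with x hx
    rw [← ENNReal.ofReal_mul (inv_pos.2 hw.1).le]
    exact ENNReal.ofReal_le_ofReal ((le_inv_mul_iff₀ hw.1).2 hx.1)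

theorem isLocallyFiniteMeasure_of_twoPowerWeight (hw : TwoPowerWeight d ρ c C γ₀ γ)
    (hγ₀ : γ₀ < d) :
    IsLocallyFiniteMeasure
      ((volume : Measure (Ed d)).withDensity fun x => ENNReal.ofReal (ρ x)) := by
  refine ⟨fun x => ⟨ball 0 (‖x‖ + 1), isOpen_ball.mem_nhds (by simp), ?_⟩⟩
  have hint : IntegrableOn (fun x : Ed d => C * twoPower γ₀ γ x) (ball 0 (‖x‖ + 1)) :=
    (integrableOn_ball_twoPower (by simpa using hγ₀) γ _).const_mul C
  rw [withDensity_apply _ measurableSet_ball]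
  refine (lintegral_mono_ae ?_).trans_lt hint.lintegral_lt_top
  filter_upwards [ae_restrict_of_ae (twoPowerWeight_ae_bounds hw)] with y hy
  exact ENNReal.ofReal_le_ofReal hy.2

end TwoPowerWeight

section Approximation

variable {E : Type*} [NormedAddCommGroup E]

/-- A sequence of bump functions shrinking to the origin with a fixed ratio of radii. -/
noncomputable def shrinkingBump (E : Type*) [NormedAddCommGroup E] (n : ℕ) :
    ContDiffBump (0 : E) :=
  ⟨1 / (2 * (n + 1)), 1 / (n + 1), by positivity, by gcongr; linarith⟩

theorem tendsto_rOut_shrinkingBump :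
    Tendsto (fun n => (shrinkingBump E n).rOut) atTop (𝓝 0) :=
  tendsto_one_div_add_atTop_nhds_zero_nat

theorem rOut_shrinkingBump_le_two_mul_rIn (n : ℕ) :
    (shrinkingBump E n).rOut ≤ 2 * (shrinkingBump E n).rIn := by
  simp only [shrinkingBump]
  field_simp
  rfl

theorem rOut_shrinkingBump_le_one (n : ℕ) : (shrinkingBump E n).rOut ≤ 1 :=
  (div_le_one n.cast_add_one_pos).2 (le_add_of_nonneg_left n.cast_nonneg)

variable [NormedSpace ℝ E] [FiniteDimensional ℝ E]

/-- A smooth cutoff equal to `1` on the ball of radius `R` and supported in the ball of radius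
`2 * R`. -/
noncomputable def ballCutoff (R : ℝ) (x : E) : ℝ :=
  (default : ContDiffBump (0 : E)) (R⁻¹ • x)

theorem contDiff_ballCutoff (R : ℝ) : ContDiff ℝ (⊤ : ℕ∞) (ballCutoff R : E → ℝ) :=
  (default : ContDiffBump (0 : E)).contDiff.comp (contDiff_const_smul _)

theorem hasCompactSupport_ballCutoff {R : ℝ} (hR : 0 < R) :
    HasCompactSupport (ballCutoff R : E → ℝ) :=
  (default : ContDiffBump (0 : E)).hasCompactSupport.comp_smul (inv_pos.2 hR).ne'

theorem ballCutoff_nonneg (R : ℝ) (x : E) : 0 ≤ ballCutoff R x :=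
  ContDiffBump.nonneg _

theorem abs_ballCutoff_le_one (R : ℝ) (x : E) : |ballCutoff R x| ≤ 1 := by
  rw [abs_of_nonneg (ballCutoff_nonneg R x)]
  exact ContDiffBump.le_one _

theorem ballCutoff_eq_one {R : ℝ} {x : E} (hR : 0 < R) (hx : ‖x‖ ≤ R) : ballCutoff R x = 1 := by
  refine ContDiffBump.one_of_mem_closedBall _ (mem_closedBall_zero_iff.2 ?_)
  rw [norm_smul, Real.norm_of_nonneg (by positivity)]
  exact inv_mul_le_one_of_le₀ hx hR.le

theorem eventually_ballCutoff_eq_one {S : Set E} (hS : IsCompact S) :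
    ∀ᶠ n : ℕ in atTop, ∀ x ∈ S, ballCutoff (n + 1 : ℝ) x = 1 := by
  obtain ⟨r, hr⟩ := hS.isBounded.exists_norm_le
  filter_upwards [eventually_ge_atTop ⌈r⌉₊] with n hn x hx
  have hrn : r ≤ n := Nat.ceil_le.1 hn
  exact ballCutoff_eq_one n.cast_add_one_pos (by linarith [hr x hx])

theorem tendsto_ballCutoff (x : E) : Tendsto (fun n : ℕ => ballCutoff (n + 1 : ℝ) x) atTop (𝓝 1) :=
  tendsto_const_nhds.congr' <| (eventually_ballCutoff_eq_one isCompact_singleton).mono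
    fun _ hn => (hn x rfl).symm

end Approximation

section EnergyInequality

variable {d : ℕ} {s Cds p : ℝ} {v V ρ : Ed d → ℝ} {c C γ₀ γ : ℝ}

/-- The smooth compactly supported approximations `ηₙ ∗ (χₙ (ηₙ ∗ v))` of `v`, where `χₙ` is a
cutoff at scale `n + 1` and `ηₙ` a mollifier at scale `1 / (n + 1)`. Tested against `(-Δ)^s v`,
the outer mollification moves onto `v`, which makes the pairing quadratic in `ηₙ ∗ v`. -/
noncomputable def cutoffApprox (v : Ed d → ℝ) (n : ℕ) : Ed d → ℝ :=
  bumpConv (shrinkingBump (Ed d) n)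
    (ballCutoff (n + 1 : ℝ) * bumpConv (shrinkingBump (Ed d) n) v)

theorem tendsto_integral_mul_cutoffApprox (hw : TwoPowerWeight d ρ c C γ₀ γ)
    (hγ₀ : γ₀ ∈ Ico (0 : ℝ) d) (hρ : Measurable ρ) (hρ0 : ∀ x, 0 < ρ x) (hp : 1 < p)
    (hloc : LocallyIntegrable v) (hv : MemWLp d p ρ v)
    (hV : MemWLp d (p / (p - 1)) (fun x => ρ x ^ (-(p / (p - 1) - 1))) V) :
    Tendsto (fun n => ∫ x, V x * cutoffApprox v n x) atTop (𝓝 (∫ x, V x * v x)) := by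
  obtain ⟨D, hD, hA1⟩ := exists_bumpA1_of_twoPowerWeight hw hγ₀ 2
  have := isLocallyFiniteMeasure_of_twoPowerWeight hw hγ₀.2
  have hpq : p.HolderConjugate (p / (p - 1)) := .conjExponent hp
  have := hpq.symm.ennrealOfReal
  have hv_mem := memLp_withDensity_of_integrable_abs_rpow_mul hρ (fun x => (hρ0 x).le) hpq.pos
    hv.1 hv.2
  have hV_mem := memLp_withDensity_of_integrable_abs_rpow_mul (f := fun x => V x / ρ x) hρ
    (fun x => (hρ0 x).le) hpq.symm.pos (hV.1.aemeasurable.div hρ.aemeasurable).aestronglyMeasurable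
    (by simpa only [abs_div_rpow_mul_self (hρ0 _)] using hV.2)
  have hlim := tendsto_eLpNorm_bumpConv_cutoff_mul_bumpConv_sub tendsto_rOut_shrinkingBump
    hρ.ennreal_ofReal hD (fun n => hA1 _ (rOut_shrinkingBump_le_one n)
      (rOut_shrinkingBump_le_two_mul_rIn n)) (ENNReal.one_le_ofReal.2 hp.le) ENNReal.ofReal_ne_top
    hloc hv_mem (fun n : ℕ => (contDiff_ballCutoff (n + 1 : ℝ)).continuous)
    (fun n => abs_ballCutoff_le_one _) fun S hS => eventually_ballCutoff_eq_one hS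
  have hcont (n : ℕ) : Continuous (cutoffApprox v n) :=
    continuous_bumpConv _ ((contDiff_ballCutoff _).continuous.mul
      (continuous_bumpConv _ hloc)).locallyIntegrable
  simpa only [integral_div_mul_withDensity hρ hρ0] using tendsto_integral_mul_of_tendsto_eLpNorm
    hV_mem hv_mem (fun n => (hcont n).aestronglyMeasurable) hlim

variable [NeZero d]

theorem exists_localEnergy_bumpConv_ballCutoff_le (hs : s ∈ Ioo (0 : ℝ) 1) (hC : 0 < Cds)
    (hV : IsDistFracLap d s Cds v V) (hv : MemLp v 2 (decayMeasure (Ed d) (d + 2 * s) 1)) :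
    ∃ B : ℝ, ∀ R, 1 ≤ R → MemLp v 2 (decayMeasure (Ed d) (d + 2 * s) R) →
      ∀ b : ContDiffBump (0 : Ed d), b.rOut ≤ 1 → ∀ K,
        K = 2 / Cds * (∫ x, V x * bumpConv b (ballCutoff R * bumpConv b v) x) +
          B * ∫ x, bumpConv b v x ^ 2 * decayWeight (d + 2 * s) R x →
        0 ≤ K ∧
          localEnergy (d + 2 * s) (bumpConv b v) (ballCutoff R) ≤ ENNReal.ofReal K := by
  have ha : finrank ℝ (Ed d) < d + 2 * s := by simp [hs.1]
  have hvi := integrable_mul_one_add_norm_rpow ha hv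
  have hloc := locallyIntegrable_of_memLp_decayMeasure ha hv
  obtain ⟨B, -, hW⟩ := exists_integral_abs_secondDiff_comp_inv_smul_le ha (by simp [hs.2])
    (default : ContDiffBump (0 : Ed d)).contDiff (ContDiffBump.hasCompactSupport _)
  have hsq {R : ℝ} (hR : 1 ≤ R) (hvR : MemLp v 2 (decayMeasure (Ed d) (d + 2 * s) R))
      {b : ContDiffBump (0 : Ed d)} (hb : b.rOut ≤ 1) :
      Integrable fun x => bumpConv b v x ^ 2 * decayWeight (d + 2 * s) R x :=
    integrable_sq_mul_of_memLp_withDensity (measurable_decayWeight _ R)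
      (decayWeight_nonneg (by linarith)) (memLp_bumpConv_decayMeasure (by linarith)
        (hb.trans hR) hloc hvR)
  refine ⟨1 / 2 * B, fun R hR hvR b hb K hK => ?_⟩
  refine localEnergy_bumpConv_le hs hC hloc hvi hV (contDiff_ballCutoff R)
    (hasCompactSupport_ballCutoff (by linarith)) (ballCutoff_nonneg R) b ?_ (hW R (by linarith))
    (((hsq hR hvR hb).const_mul B).congr (.of_forall fun x => mul_left_comm _ _ _)) ?_
  · simpa [decayWeight] using hsq le_rfl hv hb
  · simp only [hK, mul_left_comm _ B, integral_const_mul]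
    ring

theorem localEnergy_one_le_of_tendsto_cutoffApprox (hs : s ∈ Ioo (0 : ℝ) 1) (hC : 0 < Cds)
    (hV : IsDistFracLap d s Cds v V)
    (hv : ∀ n : ℕ, MemLp v 2 (decayMeasure (Ed d) (d + 2 * s) (n + 1)))
    (hvlim : Tendsto (fun n : ℕ => eLpNorm v 2 (decayMeasure (Ed d) (d + 2 * s) (n + 1)))
      atTop (𝓝 0)) {L : ℝ}
    (hL : Tendsto (fun n => ∫ x, V x * cutoffApprox v n x) atTop (𝓝 L)) :
    0 ≤ 2 / Cds * L ∧ localEnergy (d + 2 * s) v 1 ≤ ENNReal.ofReal (2 / Cds * L) := by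
  have hv1 : MemLp v 2 (decayMeasure (Ed d) (d + 2 * s) 1) := by simpa using hv 0
  have hloc := locallyIntegrable_of_memLp_decayMeasure (by simp [hs.1]) hv1
  obtain ⟨B, hB⟩ := exists_localEnergy_bumpConv_ballCutoff_le hs hC hV hv1
  set b := shrinkingBump (Ed d)
  have hb (n : ℕ) : (b n).rOut ≤ n + 1 := (rOut_shrinkingBump_le_one n).trans (by simp)
  set K : ℕ → ℝ := fun n => 2 / Cds * (∫ x, V x * cutoffApprox v n x) +
    B * ∫ x, bumpConv (b n) v x ^ 2 * decayWeight (d + 2 * s) (n + 1) x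
  have hK_lim : Tendsto K atTop (𝓝 (2 / Cds * L)) := by
    simpa only [mul_zero, add_zero] using (hL.const_mul (2 / Cds)).add
      ((tendsto_integral_sq_bumpConv_mul_decayWeight (fun n => n.cast_add_one_pos) hb hloc
        hv hvlim).const_mul B)
  have hE (n : ℕ) : 0 ≤ K n ∧
      localEnergy (d + 2 * s) (bumpConv (b n) v) (ballCutoff (n + 1 : ℝ)) ≤ ENNReal.ofReal (K n) :=
    hB (n + 1) (by simp) (hv n) (b n) (rOut_shrinkingBump_le_one n) _ rfl
  refine ⟨ge_of_tendsto' hK_lim fun n => (hE n).1, ?_⟩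
  calc localEnergy (d + 2 * s) v 1
      ≤ liminf (fun n => localEnergy (d + 2 * s) (bumpConv (b n) v) (ballCutoff (n + 1 : ℝ)))
          atTop :=
        localEnergy_le_liminf (fun n => (continuous_bumpConv _ hloc).measurable)
          (fun n => (contDiff_ballCutoff _).continuous.measurable)
          (ContDiffBump.ae_convolution_tendsto_right_of_locallyIntegrable
            tendsto_rOut_shrinkingBump (.of_forall rOut_shrinkingBump_le_two_mul_rIn) hloc)
          tendsto_ballCutoff
    _ ≤ liminf (fun n => ENNReal.ofReal (K n)) atTop :=
        liminf_le_liminf (.of_forall fun n => (hE n).2)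
    _ = ENNReal.ofReal (2 / Cds * L) := (ENNReal.tendsto_ofReal hK_lim).liminf_eq

theorem memLp_and_tendsto_eLpNorm_decayMeasure (hs : 0 < s) (hw : TwoPowerWeight d ρ c C γ₀ γ)
    (hγ₀ : γ₀ ∈ Ico (0 : ℝ) d) (hγ : γ ∈ Icc (0 : ℝ) (d - p / 2 * (d - 2 * s)))
    (hρ : Measurable ρ) (hρ0 : ∀ x, 0 ≤ ρ x) (hp : 2 ≤ p) (hv : MemWLp d p ρ v) :
    (∀ n : ℕ, MemLp v 2 (decayMeasure (Ed d) (d + 2 * s) (n + 1))) ∧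
      Tendsto (fun n : ℕ => eLpNorm v 2 (decayMeasure (Ed d) (d + 2 * s) (n + 1)))
        atTop (𝓝 0) := by
  have := isLocallyFiniteMeasure_of_twoPowerWeight hw hγ₀.2
  have hp0 : 0 < p := two_pos.trans_le hp
  have hv_mem := memLp_withDensity_of_integrable_abs_rpow_mul hρ hρ0 hp0 hv.1 hv.2
  have hγ_le : γ ≤ finrank ℝ (Ed d) -
      (ENNReal.ofReal p).toReal / 2 * (2 * finrank ℝ (Ed d) - (d + 2 * s)) := by
    rw [ENNReal.toReal_ofReal hp0.le, finrank_euclideanSpace_fin]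
    linarith [hγ.2]
  obtain ⟨K, hK, hle⟩ := exists_eLpNorm_decayMeasure_le
    (by simpa using ENNReal.ofReal_le_ofReal hp) ENNReal.ofReal_ne_top hρ hρ0 hw.1 hγ.1 hγ_le
    (mul_max_one_norm_rpow_le_of_twoPowerWeight hw hγ₀.1)
  refine ⟨fun n => ⟨hv.1.mono_ac (withDensity_absolutelyContinuous _ _),
    (hle (n + 1) (by simp) v hv.1).trans_lt (ENNReal.mul_lt_top hK.lt_top hv_mem.2)⟩, ?_⟩
  exact tendsto_eLpNorm_decayMeasure ENNReal.ofReal_ne_top hK (by simpa using hs)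
    (tendsto_natCast_atTop_atTop.atTop_add tendsto_const_nhds)
    (fun n g hg => hle (n + 1) (by simp) g hg) hv.1 hv_mem

end EnergyInequality

end FractionalLaplacian

open FractionalLaplacian

theorem stmt16 (d : ℕ) (hd : 1 ≤ d) (s : ℝ) (hs : s ∈ Set.Ioo (0:ℝ) 1)
    (Cds : ℝ) (hC : 0 < Cds) (p : ℝ)
    (hp : ((d:ℝ) ≤ 2 * s ∧ 2 ≤ p) ∨
          (2 * s < (d:ℝ) ∧ 2 ≤ p ∧ p ≤ 2 * d / ((d:ℝ) - 2 * s)))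
    (ρ : Ed d → ℝ) (hρpos : ∀ x, 0 < ρ x) (hρm : Measurable ρ)
    (c C γ₀ γ : ℝ) (hw : TwoPowerWeight d ρ c C γ₀ γ)
    (hγ₀ : γ₀ ∈ Set.Ico (0:ℝ) d)
    (hγ : γ ∈ Set.Icc (0:ℝ) ((d:ℝ) - (p / 2) * ((d:ℝ) - 2 * s))) :
    ∀ v V : Ed d → ℝ, MemX d s Cds p ρ v V →
      Integrable (fun z : Ed d × Ed d =>
        (v z.1 - v z.2) ^ 2 / dist z.1 z.2 ^ ((d:ℝ) + 2 * s)) ∧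
      Cds / 2 * ∫ z : Ed d × Ed d,
          (v z.1 - v z.2) ^ 2 / dist z.1 z.2 ^ ((d:ℝ) + 2 * s)
        ≤ ∫ x : Ed d, v x * V x := by
  intro v V ⟨hv, hV, hVp⟩
  have : NeZero d := ⟨by omega⟩
  have hp2 : 2 ≤ p := hp.elim And.right fun h => h.2.1
  obtain ⟨hv2, hv2lim⟩ :=
    memLp_and_tendsto_eLpNorm_decayMeasure hs.1 hw hγ₀ hγ hρm (fun x => (hρpos x).le) hp2 hv
  have hloc : LocallyIntegrable v :=
    locallyIntegrable_of_memLp_decayMeasure (a := d + 2 * s) (by simp [hs.1]) (by simpa using hv2 0)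
  have hpair :=
    tendsto_integral_mul_cutoffApprox hw hγ₀ hρm hρpos (one_lt_two.trans_le hp2) hloc hv hVp
  obtain ⟨hnonneg, henergy⟩ :=
    localEnergy_one_le_of_tendsto_cutoffApprox hs hC hV hv2 hv2lim hpair
  rw [localEnergy_one] at henergy
  obtain ⟨hint, hle⟩ := integrable_and_integral_le_of_lintegral_ofReal_le
    (((hv.1.comp_fst.sub hv.1.comp_snd).aemeasurable.pow_const 2).div
      (measurable_dist.pow_const _).aemeasurable).aestronglyMeasurable
    (fun z => div_nonneg (sq_nonneg _) (Real.rpow_nonneg dist_nonneg _)) hnonneg henergy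
  refine ⟨hint, ?_⟩
  calc _ ≤ Cds / 2 * (2 / Cds * ∫ x, V x * v x) :=
        mul_le_mul_of_nonneg_left hle (div_pos hC two_pos).le
    _ = ∫ x, v x * V x := by simp only [mul_comm (V _)]; field_simp
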